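/- arXiv:0904.1081 — 4 statements merged into one kernel-verified Lean document; each statement's English description precedes it below -/
import Mathlib

section
/- Let S be a countable subset of the positive real numbers. Then there exists a separable unital simple C*-algebra A with a unique tracial state τ such that S ⊆ F(A). -/
open scoped Matrix ComplexOrder

section CommonDefs

variable (A : Type*) [CStarAlgebra A]

/-- `τ` is a tracial state on the unital C*-algebra `A`. -/
structure IsTracialState (τ : A →ₗ[ℂ] ℂ) : Prop where
  map_one : τ 1 = 1
  nonneg : ∀ a : A, 0 ≤ τ (star a * a)
  tracial : ∀ a b : A, τ (a * b) = τ (b * a)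

/-- `A` is simple: every closed two-sided ideal is trivial. -/
def IsSimpleCStarAlgebra : Prop :=
  ∀ I : TwoSidedIdeal A, IsClosed (I : Set A) → I = ⊥ ∨ I = ⊤

/-- `φ` is a *-isomorphism from `A` onto the corner `p Mₙ(A) p`. -/
def IsCornerIso {n : ℕ} (p : Matrix (Fin n) (Fin n) A)
    (φ : A → Matrix (Fin n) (Fin n) A) : Prop :=
  Function.Injective φ ∧
  (∀ a b : A, φ (a + b) = φ a + φ b) ∧
  (∀ a b : A, φ (a * b) = φ a * φ b) ∧
  (∀ (c : ℂ) (a : A), φ (c • a) = c • φ a) ∧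
  (∀ a : A, φ (star a) = star (φ a)) ∧
  Set.range φ = {x : Matrix (Fin n) (Fin n) A | p * x * p = x}

/-- The fundamental group of a unital simple C*-algebra with unique tracial state `τ`:
the set of values `(τ ⊗ Tr)(p)` over projections `p ∈ Mₙ(A)` whose corner `p Mₙ(A) p`
is *-isomorphic to `A`. -/
def fundamentalGroup (τ : A →ₗ[ℂ] ℂ) : Set ℝ :=
  {t : ℝ | ∃ (n : ℕ) (p : Matrix (Fin n) (Fin n) A), 0 < n ∧
    p * p = p ∧ star p = p ∧ (∃ φ, IsCornerIso A p φ) ∧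
    (∑ i, τ (p i i)) = (t : ℂ)}

end CommonDefs

/-! Let `K` be a subfield of `ℝ` containing `S`, countable if `S` is, and let `A` be the C*-algebra
on `ℓ²([0,1))` generated by the partial isometries `δ_x ↦ δ_{x + k}` (`x ∈ [a,b)`,
`x + k ∈ [0,1)`), for `a, b, k ∈ K`. Near a point `x`, a finite linear combination of generators
acts as the scalar given by its diagonal coefficient at `x`; so the compression of `a ∈ A` to
`[x, d)` is close to `⟪δ_x, a δ_x⟫` times the projection when `d` is close to `x`, which yields
simplicity. Averaging the diagonal coefficients over `[0,1)` gives a tracial state. Any tracial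
state takes the value `b - a` at the projection onto `[a,b)`, by translation invariance, and
vanishes at a translation by `k ≠ 0`, as it has zero compression to short intervals; so the trace
is unique. Finally, conjugation by the dilation `x ↦ s * x`, for `s ∈ K` positive, preserves
translations with data in `K`: cutting `[0, s)` into unit pieces identifies `A` with a corner of a
matrix algebra over `A`, and the corresponding projection has trace `s`. -/

noncomputable section

open Filter MeasureTheory Set
open scoped Topology

section PartialBijection

variable {α β : Type*}

open Classical in
/-- The partial bijection whose graph is the bi-unique relation `r`. -/
def pequivOfBiUnique (r : α → β → Prop) (hr : Relator.BiUnique r) : α ≃. β where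
  toFun x := if h : ∃ y, r x y then some h.choose else none
  invFun y := if h : ∃ x, r x y then some h.choose else none
  inv x y := by
    simp only [Option.dite_none_right_eq_some, Option.some.injEq]
    constructor
    · rintro ⟨h, rfl⟩
      have h' : ∃ y', r h.choose y' := ⟨y, h.choose_spec⟩
      exact ⟨h', hr.2 h'.choose_spec h.choose_spec⟩
    · rintro ⟨h, rfl⟩
      have h' : ∃ x', r x' h.choose := ⟨x, h.choose_spec⟩
      exact ⟨h', hr.1 h'.choose_spec h.choose_spec⟩

theorem mem_pequivOfBiUnique {r : α → β → Prop} (hr : Relator.BiUnique r) {x : α} {y : β} :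
    y ∈ pequivOfBiUnique r hr x ↔ r x y := by
  classical
  change (if h : ∃ y, r x y then some h.choose else none) = some y ↔ _
  simp only [Option.dite_none_right_eq_some, Option.some.injEq]
  constructor
  · rintro ⟨h, rfl⟩
    exact h.choose_spec
  · exact fun h ↦ ⟨⟨y, h⟩, hr.2 (Exists.choose_spec _) h⟩

end PartialBijection

section MatrixCoefficients

/-- The Hilbert space `ℓ²(ι)`. -/
abbrev EllTwo (ι : Type*) := lp (fun _ : ι ↦ ℂ) 2

/-- The C*-algebra of bounded operators on `ℓ²(ι)`. -/
abbrev EllTwoEnd (ι : Type*) := EllTwo ι →L[ℂ] EllTwo ι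

variable {ι : Type*}

open Classical in
/-- The vector of the standard orthonormal basis of `ℓ²(ι)` supported at `x`. -/
def basisVec (x : ι) : EllTwo ι := lp.single 2 x 1

theorem basisVec_apply_self (x : ι) : basisVec x x = 1 := by
  simp [basisVec]

theorem basisVec_apply_of_ne {x y : ι} (h : y ≠ x) : basisVec x y = 0 := by
  simp [basisVec, h]

theorem norm_basisVec (x : ι) : ‖basisVec x‖ = 1 := by
  simp [basisVec, lp.norm_single]

theorem inner_basisVec_left (x : ι) (ξ : EllTwo ι) : inner ℂ (basisVec x) ξ = ξ x := by
  simp [basisVec, lp.inner_single_left]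

/-- The matrix coefficient `a ↦ ⟪δ_y, a δ_x⟫` of operators on `ℓ²(ι)`. -/
def matrixCoeff (y x : ι) : EllTwoEnd ι →L[ℂ] ℂ :=
  lp.evalCLM ℂ (fun _ : ι ↦ ℂ) 2 y ∘L ContinuousLinearMap.apply ℂ _ (basisVec x)

theorem matrixCoeff_apply (y x : ι) (a : EllTwoEnd ι) :
    matrixCoeff y x a = a (basisVec x) y := rfl

theorem matrixCoeff_eq_inner (y x : ι) (a : EllTwoEnd ι) :
    matrixCoeff y x a = inner ℂ (basisVec y) (a (basisVec x)) :=
  (inner_basisVec_left y _).symm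

theorem ext_matrixCoeff {a b : EllTwoEnd ι}
    (h : ∀ y x, matrixCoeff y x a = matrixCoeff y x b) : a = b := by
  classical
  refine lp.ext_continuousLinearMap (by norm_num) fun x ↦ ?_
  ext y
  simpa [matrixCoeff_apply, basisVec] using h y x

theorem norm_matrixCoeff_le (y x : ι) (a : EllTwoEnd ι) :
    ‖matrixCoeff y x a‖ ≤ ‖a‖ := by
  refine (lp.norm_apply_le_norm (by norm_num) (a (basisVec x)) y).trans ?_
  simpa [norm_basisVec] using a.le_opNorm (basisVec x)

theorem matrixCoeff_one_self (x : ι) : matrixCoeff x x 1 = 1 :=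
  basisVec_apply_self x

theorem matrixCoeff_star (y x : ι) (a : EllTwoEnd ι) :
    matrixCoeff y x (star a) = star (matrixCoeff x y a) := by
  rw [matrixCoeff_eq_inner, matrixCoeff_eq_inner, ContinuousLinearMap.star_eq_adjoint,
    ContinuousLinearMap.adjoint_inner_right]
  exact (inner_conj_symm _ _).symm

theorem matrixCoeff_star_mul_self (x : ι) (a : EllTwoEnd ι) :
    matrixCoeff x x (star a * a) = ((‖a (basisVec x)‖ ^ 2 : ℝ) : ℂ) := by
  rw [matrixCoeff_eq_inner, ContinuousLinearMap.star_eq_adjoint, mul_apply_eq_comp,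
    ContinuousLinearMap.adjoint_inner_right, inner_self_eq_norm_sq_to_K]
  norm_cast

end MatrixCoefficients

section PequivOperators

variable {ι : Type*}

theorem sum_norm_rpow_comp_symm_le (f : ι ≃. ι) (ξ : EllTwo ι) (s : Finset ι) :
    ∑ y ∈ s, ‖(f.symm y).elim 0 ξ‖ ^ (2 : ENNReal).toReal ≤ ‖ξ‖ ^ (2 : ENNReal).toReal := by
  classical
  have disjoint_fibers : (s : Set ι).PairwiseDisjoint fun y ↦ (f.symm y).toFinset := by
    intro y _ y' _ hne
    refine Finset.disjoint_left.2 fun x hx hx' ↦ ?_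
    exact hne (f.symm.inj (Option.mem_toFinset.1 hx) (Option.mem_toFinset.1 hx'))
  calc ∑ y ∈ s, ‖(f.symm y).elim 0 ξ‖ ^ (2 : ENNReal).toReal
      = ∑ y ∈ s, ∑ x ∈ (f.symm y).toFinset, ‖ξ x‖ ^ (2 : ENNReal).toReal :=
        Finset.sum_congr rfl fun y _ ↦ by cases f.symm y <;> simp
    _ = ∑ x ∈ s.biUnion fun y ↦ (f.symm y).toFinset, ‖ξ x‖ ^ (2 : ENNReal).toReal :=
        (Finset.sum_biUnion disjoint_fibers).symm
    _ ≤ ‖ξ‖ ^ (2 : ENNReal).toReal := lp.sum_rpow_le_norm_rpow (by norm_num) ξ _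

/-- The partial isometry of `ℓ²(ι)` sending `δ_x` to `δ_{f x}` where `f` is defined and to `0`
elsewhere. -/
def pequivOp (f : ι ≃. ι) : EllTwoEnd ι :=
  LinearMap.mkContinuous
    { toFun ξ := ⟨fun y ↦ (f.symm y).elim 0 ξ, memℓp_gen' (sum_norm_rpow_comp_symm_le f ξ)⟩
      map_add' ξ η := by
        ext y
        change (f.symm y).elim 0 ⇑(ξ + η) = (f.symm y).elim 0 ⇑ξ + (f.symm y).elim 0 ⇑η
        cases f.symm y
        · exact (add_zero 0).symm
        · rfl
      map_smul' c ξ := by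
        ext y
        change (f.symm y).elim 0 ⇑(c • ξ) = c * (f.symm y).elim 0 ⇑ξ
        cases f.symm y <;> simp }
    1 fun ξ ↦ by
      rw [one_mul]
      exact lp.norm_le_of_forall_sum_le (by norm_num) (norm_nonneg _)
        (sum_norm_rpow_comp_symm_le f ξ)

theorem pequivOp_apply (f : ι ≃. ι) (ξ : EllTwo ι) (y : ι) :
    pequivOp f ξ y = (f.symm y).elim 0 ξ := rfl

theorem norm_pequivOp_le_one (f : ι ≃. ι) : ‖pequivOp f‖ ≤ 1 :=
  LinearMap.mkContinuous_norm_le _ zero_le_one _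

theorem pequivOp_basisVec (f : ι ≃. ι) (x : ι) :
    pequivOp f (basisVec x) = (f x).elim 0 basisVec := by
  ext z
  rw [pequivOp_apply]
  by_cases hz : z ∈ f x
  · rw [(PEquiv.mem_iff_mem f).2 hz, Option.mem_def.1 hz, Option.elim_some, Option.elim_some,
      basisVec_apply_self, basisVec_apply_self]
  · trans 0
    · cases hw : f.symm z with
      | none => rfl
      | some w => exact basisVec_apply_of_ne fun hwx ↦ hz ((PEquiv.mem_iff_mem f).1 (hwx ▸ hw))
    · cases hw : f x with
      | none => rfl
      | some w => exact (basisVec_apply_of_ne fun h ↦ hz (hw.trans (congrArg some h.symm))).symm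

theorem matrixCoeff_pequivOp_mul (f : ι ≃. ι) (a : EllTwoEnd ι) (y x : ι) :
    matrixCoeff y x (pequivOp f * a) = (f.symm y).elim 0 fun z ↦ matrixCoeff z x a := rfl

theorem matrixCoeff_mul_pequivOp (f : ι ≃. ι) (a : EllTwoEnd ι) (y x : ι) :
    matrixCoeff y x (a * pequivOp f) = (f x).elim 0 fun z ↦ matrixCoeff y z a := by
  rw [matrixCoeff_apply, mul_apply_eq_comp, pequivOp_basisVec]
  cases f x <;> simp [matrixCoeff_apply]

open Classical in
theorem matrixCoeff_pequivOp (f : ι ≃. ι) (y x : ι) :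
    matrixCoeff y x (pequivOp f) = if y ∈ f x then 1 else 0 := by
  rw [matrixCoeff_apply, pequivOp_basisVec]
  split_ifs with h
  · rw [Option.mem_def.1 h, Option.elim_some, basisVec_apply_self]
  · cases hz : f x with
    | none => rfl
    | some z => exact basisVec_apply_of_ne fun hyz ↦ h (hyz ▸ hz)

theorem star_pequivOp (f : ι ≃. ι) : star (pequivOp f) = pequivOp f.symm := by
  classical
  refine ext_matrixCoeff fun y x ↦ ?_
  simp only [matrixCoeff_star, matrixCoeff_pequivOp, PEquiv.mem_iff_mem]
  split_ifs <;> simp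

theorem pequivOp_mul (g f : ι ≃. ι) : pequivOp g * pequivOp f = pequivOp (f.trans g) := by
  ext ξ y
  rw [mul_apply_eq_comp, pequivOp_apply, pequivOp_apply, PEquiv.symm_trans_rev]
  cases h : g.symm y <;> simp [PEquiv.trans, h, pequivOp_apply]

theorem pequivOp_refl : pequivOp (PEquiv.refl ι) = 1 := by
  ext ξ y
  rfl

end PequivOperators

section CoordinateProjections

variable {ι : Type*}

open Classical in
/-- The projection of `ℓ²(ι)` onto the vectors supported in `s`. -/
def coordProj (s : Set ι) : EllTwoEnd ι := pequivOp (PEquiv.ofSet s)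

theorem norm_coordProj_le_one (s : Set ι) : ‖coordProj s‖ ≤ 1 := norm_pequivOp_le_one _

theorem pequivOp_eq_coordProj {f : ι ≃. ι} {s : Set ι} (h : ∀ x y, y ∈ f x ↔ y = x ∧ y ∈ s) :
    pequivOp f = coordProj s := by
  classical
  refine congrArg pequivOp (PEquiv.ext fun x ↦ Option.ext fun y ↦ ?_)
  exact (h x y).trans PEquiv.mem_ofSet_iff.symm

open Classical in
theorem coordProj_apply (s : Set ι) (ξ : EllTwo ι) (y : ι) :
    coordProj s ξ y = if y ∈ s then ξ y else 0 := by
  rw [coordProj, pequivOp_apply, PEquiv.ofSet_symm]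
  by_cases h : y ∈ s <;> simp [PEquiv.ofSet, h]

open Classical in
theorem matrixCoeff_coordProj (s : Set ι) (y x : ι) :
    matrixCoeff y x (coordProj s) = if y = x ∧ y ∈ s then 1 else 0 := by
  rw [coordProj, matrixCoeff_pequivOp]
  exact if_congr PEquiv.mem_ofSet_iff rfl rfl

open Classical in
theorem matrixCoeff_compression (s : Set ι) (a : EllTwoEnd ι) (y x : ι) :
    matrixCoeff y x (coordProj s * a * coordProj s) =
      if y ∈ s ∧ x ∈ s then matrixCoeff y x a else 0 := by
  have coordProj_basisVec : coordProj s (basisVec x) = if x ∈ s then basisVec x else 0 := by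
    rw [coordProj, pequivOp_basisVec]
    by_cases h : x ∈ s <;> simp [PEquiv.ofSet, h]
  rw [matrixCoeff_apply, mul_apply_eq_comp, mul_apply_eq_comp, coordProj_apply,
    coordProj_basisVec, ite_and]
  by_cases h : x ∈ s <;> simp [h, matrixCoeff_apply]

theorem norm_compression_le (s : Set ι) (a : EllTwoEnd ι) :
    ‖coordProj s * a * coordProj s‖ ≤ ‖a‖ :=
  calc ‖coordProj s * a * coordProj s‖ ≤ 1 * ‖a‖ * 1 := by
        refine (norm_mul₃_le).trans ?_
        gcongr <;> exact norm_coordProj_le_one s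
    _ = ‖a‖ := by rw [one_mul, mul_one]

theorem coordProj_mul_coordProj (s t : Set ι) :
    coordProj s * coordProj t = coordProj (s ∩ t) := by
  classical
  ext ξ y
  simp only [mul_apply_eq_comp, coordProj_apply, mem_inter_iff, ite_and]

theorem isStarProjection_coordProj (s : Set ι) : IsStarProjection (coordProj s) := by
  refine ⟨?_, ?_⟩
  · rw [IsIdempotentElem, coordProj_mul_coordProj, inter_self]
  · rw [IsSelfAdjoint, coordProj, star_pequivOp, PEquiv.ofSet_symm]

theorem coordProj_univ : coordProj (univ : Set ι) = 1 := by
  classical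
  ext ξ y
  exact (coordProj_apply univ ξ y).trans (if_pos (mem_univ y))

theorem coordProj_empty : coordProj (∅ : Set ι) = 0 := by
  ext ξ y
  exact (coordProj_apply ∅ ξ y).trans (if_neg (notMem_empty y))

theorem coordProj_union {s t : Set ι} (h : Disjoint s t) :
    coordProj (s ∪ t) = coordProj s + coordProj t := by
  classical
  ext ξ y
  change coordProj (s ∪ t) ξ y = coordProj s ξ y + coordProj t ξ y
  have hy := @Disjoint.notMem_of_mem_left _ s t h y
  simp only [coordProj_apply, mem_union]
  by_cases hs : y ∈ s <;> by_cases ht : y ∈ t <;> simp_all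

theorem star_pequivOp_mul_self (f : ι ≃. ι) :
    star (pequivOp f) * pequivOp f = coordProj {x | (f x).isSome} := by
  classical
  rw [star_pequivOp, pequivOp_mul, PEquiv.self_trans_symm, coordProj]
  congr!

theorem pequivOp_mul_star_self (f : ι ≃. ι) :
    pequivOp f * star (pequivOp f) = coordProj {y | (f.symm y).isSome} := by
  simpa only [star_pequivOp, PEquiv.symm_symm] using star_pequivOp_mul_self f.symm

end CoordinateProjections

theorem closure_span_induction {R E : Type*} [Semiring R] [AddCommMonoid E] [Module R E]
    [TopologicalSpace E] {s : Set E} {p : E → Prop} (isClosed : IsClosed {x | p x})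
    (mem : ∀ x ∈ s, p x) (zero : p 0) (add : ∀ x y, p x → p y → p (x + y))
    (smul : ∀ (c : R) x, p x → p (c • x)) {x : E}
    (hx : x ∈ closure (Submodule.span R s : Set E)) : p x := by
  refine closure_minimal (fun y hy ↦ ?_) isClosed hx
  induction (hy : y ∈ Submodule.span R s) using Submodule.span_induction with
  | mem y hy => exact mem y hy
  | zero => exact zero
  | add y z _ _ hy hz => exact add y z hy hz
  | smul c y _ hy => exact smul c y hy

section Ideals

variable {A : Type*}

theorem mem_twoSidedIdeal_of_norm_compression_sub_lt {𝕜 : Type*} [NormedField 𝕜] [NormedRing A]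
    [NormedAlgebra 𝕜 A] [CompleteSpace A] {I : TwoSidedIdeal A} {a e : A} {c : 𝕜} (ha : a ∈ I)
    (he : IsIdempotentElem e) (h : ‖e * a * e - c • e‖ < ‖c‖) : e ∈ I := by
  have hc : c ≠ 0 := norm_pos_iff.1 ((norm_nonneg _).trans_lt h)
  set d : A := e - c⁻¹ • (e * a * e) with hd
  have norm_d_lt : ‖d‖ < 1 := by
    have : d = -(c⁻¹ • (e * a * e - c • e)) := by
      rw [hd, smul_sub, inv_smul_smul₀ hc, neg_sub]
    rw [this, norm_neg, norm_smul, norm_inv, inv_mul_lt_iff₀ (norm_pos_iff.2 hc), mul_one]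
    exact h
  have mul_one_sub : e * (1 - d) = c⁻¹ • (e * a * e) := by
    rw [hd, mul_sub, mul_sub, mul_one, he.eq, mul_smul_comm, ← mul_assoc, ← mul_assoc, he.eq,
      sub_sub_cancel]
  obtain ⟨u, hu⟩ := isUnit_one_sub_of_norm_lt_one norm_d_lt
  have e_eq : e = c⁻¹ • e * a * (e * ↑u⁻¹) := by
    calc e = e * (1 - d) * ↑u⁻¹ := by rw [← hu, mul_assoc, u.mul_inv, mul_one]
      _ = c⁻¹ • e * a * (e * ↑u⁻¹) := by rw [mul_one_sub]; simp only [smul_mul_assoc, mul_assoc]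
  rw [e_eq]
  exact I.mul_mem_right _ _ (I.mul_mem_left _ _ ha)

theorem mul_star_mem_twoSidedIdeal [Ring A] [Star A] {I : TwoSidedIdeal A} {v : A}
    (hv : IsIdempotentElem (v * star v)) (h : star v * v ∈ I) : v * star v ∈ I := by
  have : v * star v = v * (star v * v) * star v := by
    rw [← mul_assoc, mul_assoc, hv.eq]
  rw [this]
  exact I.mul_mem_right _ _ (I.mul_mem_left _ _ h)

theorem twoSidedIdeal_eq_top_of_one_mem [Ring A] {I : TwoSidedIdeal A} (h : 1 ∈ I) : I = ⊤ :=
  eq_top_iff.2 fun z _ ↦ by simpa only [mul_one] using I.mul_mem_left z _ h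

end Ideals

namespace IsTracialState

variable {A : Type*} [CStarAlgebra A] {σ : A →ₗ[ℂ] ℂ}

theorem continuous (hσ : IsTracialState A σ) : Continuous σ := by
  let _ : PartialOrder A := CStarAlgebra.spectralOrder A
  have _ : StarOrderedRing A := CStarAlgebra.spectralOrderedRing A
  let f : A →ₚ[ℂ] ℂ := PositiveLinearMap.mk₀ σ fun a ha ↦ by
    obtain ⟨b, rfl⟩ := CStarAlgebra.nonneg_iff_eq_star_mul_self.1 ha
    exact hσ.nonneg b
  exact map_continuous f

theorem nonneg_of_isStarProjection (hσ : IsTracialState A σ) {e : A} (he : IsStarProjection e) :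
    0 ≤ σ e := by
  simpa only [he.isSelfAdjoint.star_eq, he.isIdempotentElem.eq] using hσ.nonneg e

theorem eq_zero_of_compressions_eq_zero (hσ : IsTracialState A σ) {ι : Type*} {s : Finset ι}
    {e : ι → A} (he : ∀ j ∈ s, IsIdempotentElem (e j)) (hsum : ∑ j ∈ s, e j = 1) {a : A}
    (h : ∀ j ∈ s, e j * a * e j = 0) : σ a = 0 :=
  calc σ a = ∑ j ∈ s, σ (e j * a) := by rw [← map_sum, ← Finset.sum_mul, hsum, one_mul]
    _ = 0 := Finset.sum_eq_zero fun j hj ↦ by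
      rw [← (he j hj).eq, mul_assoc, hσ.tracial, h j hj, map_zero]

end IsTracialState

theorem eq_coe_of_additive_of_nonneg {K : Subfield ℝ} {G : K → ℝ} (one : G 1 = 1)
    (nonneg : ∀ t, 0 ≤ t → t ≤ 1 → 0 ≤ G t)
    (add : ∀ s t, 0 ≤ s → 0 ≤ t → s + t ≤ 1 → G (s + t) = G s + G t)
    {t : K} (ht : t ∈ Icc 0 1) : G t = t := by
  have mono {s t : K} (hs : 0 ≤ s) (hst : s ≤ t) (ht : t ≤ 1) : G s ≤ G t := by
    have := add s (t - s) hs (sub_nonneg.2 hst) (by simpa)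
    rw [add_sub_cancel] at this
    linarith [nonneg (t - s) (sub_nonneg.2 hst) (by linarith)]
  have map_natCast_mul (n : ℕ) {s : K} (hs : 0 ≤ s) (hn : n * s ≤ 1) : G (n * s) = n * G s := by
    induction n with
    | zero => simpa using add 0 0
    | succ n ih =>
      push_cast [add_one_mul] at hn ⊢
      rw [add _ _ (by positivity) hs hn, ih (by linarith)]
  have map_ratCast {q : ℚ≥0} (hq : (q : K) ≤ 1) : G q = q := by
    have hden : (q.den : K) ≠ 0 := Nat.cast_ne_zero.2 q.den_ne_zero
    have inv_den : (q.den : ℝ) * G (q.den : K)⁻¹ = 1 := by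
      rw [← map_natCast_mul _ (by positivity) (mul_inv_cancel₀ hden).le, mul_inv_cancel₀ hden, one]
    rw [NNRat.cast_def, div_eq_mul_inv] at hq ⊢
    rw [map_natCast_mul _ (by positivity) hq, NNRat.cast_def (K := ℝ), div_eq_mul_inv,
      eq_inv_of_mul_eq_one_right inv_den]
  have le_map {t : K} (ht : t ∈ Icc 0 1) : t ≤ G t := by
    refine le_of_forall_rat_lt_imp_le fun q hq ↦ ?_
    rcases lt_or_ge q 0 with hneg | hpos
    · exact (Rat.cast_nonpos.2 hneg.le).trans (nonneg t ht.1 ht.2)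
    · lift q to ℚ≥0 using hpos
      have hqt : (q : K) ≤ t := by exact_mod_cast hq.le
      simpa [map_ratCast (hqt.trans ht.2)] using mono (by positivity) hqt ht.2
  have compl := add t (1 - t) ht.1 (sub_nonneg.2 ht.2) (by simp)
  have le_map_compl := le_map (t := 1 - t) ⟨sub_nonneg.2 ht.2, by linarith [ht.1]⟩
  rw [add_sub_cancel, one] at compl
  push_cast at le_map_compl
  linarith [le_map ht]

section CornerIsomorphism

variable {R B : Type*} [CommSemiring R] [StarRing R] [Semiring B] [StarRing B] [Algebra R B]
  [StarModule R B] {S : StarSubalgebra R B} {n : ℕ} {w : Fin n → B}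

/-- The matrix `w a w*` over `S`, for `a ∈ S` and `w` a column with entries in the larger
algebra `B`. -/
def columnConj (w : Fin n → B) (hw : ∀ i j, ∀ a ∈ S, w i * a * star (w j) ∈ S) (a : S) :
    Matrix (Fin n) (Fin n) S :=
  Matrix.of fun i j ↦ ⟨w i * a * star (w j), hw i j a a.2⟩

theorem columnConj_mul (hsum : ∑ i, star (w i) * w i = 1)
    (hw : ∀ i j, ∀ a ∈ S, w i * a * star (w j) ∈ S) (a b : S) :
    columnConj w hw (a * b) = columnConj w hw a * columnConj w hw b := by
  ext i j
  simp only [columnConj, Matrix.mul_apply, Matrix.of_apply, AddSubmonoidClass.coe_finsetSum,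
    MulMemClass.coe_mul]
  calc w i * (a * b) * star (w j) = w i * a * (∑ k, star (w k) * w k) * b * star (w j) := by
        rw [hsum, mul_one, ← mul_assoc (w i)]
    _ = ∑ k, w i * a * star (w k) * (w k * b * star (w j)) := by
        simp only [Finset.mul_sum, Finset.sum_mul, mul_assoc]

theorem columnConj_star (hw : ∀ i j, ∀ a ∈ S, w i * a * star (w j) ∈ S) (a : S) :
    columnConj w hw (star a) = star (columnConj w hw a) := by
  ext i j
  simp [columnConj, Matrix.star_apply, mul_assoc]

theorem columnConj_injective (hsum : ∑ i, star (w i) * w i = 1)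
    (hw : ∀ i j, ∀ a ∈ S, w i * a * star (w j) ∈ S) : Function.Injective (columnConj w hw) := by
  have recover (a : S) : (a : B) = ∑ i, ∑ j, star (w i) * columnConj w hw a i j * w j :=
    calc (a : B) = (∑ i, star (w i) * w i) * a * ∑ j, star (w j) * w j := by
          rw [hsum, one_mul, mul_one]
      _ = ∑ i, ∑ j, star (w i) * columnConj w hw a i j * w j := by
          simp only [columnConj, Matrix.of_apply, Finset.sum_mul, mul_assoc]
          simp only [Finset.mul_sum]
  intro a b hab
  rw [Subtype.ext_iff, recover a, recover b, hab]

theorem mem_range_columnConj (hw : ∀ i j, ∀ a ∈ S, w i * a * star (w j) ∈ S)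
    (hw' : ∀ i j, ∀ a ∈ S, star (w i) * a * w j ∈ S) {x : Matrix (Fin n) (Fin n) S}
    (hx : columnConj w hw 1 * x * columnConj w hw 1 = x) : x ∈ range (columnConj w hw) := by
  refine ⟨∑ i, ∑ j, ⟨star (w i) * x i j * w j, hw' i j _ (x i j).2⟩, ?_⟩
  refine Eq.trans ?_ hx
  ext i j
  simp only [columnConj, Matrix.mul_apply, Matrix.of_apply, AddSubmonoidClass.coe_finsetSum,
    MulMemClass.coe_mul, OneMemClass.coe_one, mul_one, Finset.sum_mul, Finset.mul_sum, mul_assoc]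
  exact Finset.sum_comm

theorem isCornerIso_columnConj {B : Type*} [CStarAlgebra B] {S : StarSubalgebra ℂ B}
    [IsClosed (S : Set B)] {w : Fin n → B} (hsum : ∑ i, star (w i) * w i = 1)
    (hw : ∀ i j, ∀ a ∈ S, w i * a * star (w j) ∈ S)
    (hw' : ∀ i j, ∀ a ∈ S, star (w i) * a * w j ∈ S) :
    IsCornerIso S (columnConj w hw 1) (columnConj w hw) := by
  refine ⟨columnConj_injective hsum hw, fun a b ↦ ?_, columnConj_mul hsum hw, fun c a ↦ ?_,
    columnConj_star hw, Subset.antisymm ?_ fun x hx ↦ mem_range_columnConj hw hw' hx⟩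
  · ext i j
    simp [columnConj, mul_add, add_mul]
  · ext i j
    simp [columnConj]
  · rintro _ ⟨a, rfl⟩
    rw [mem_ofPred_eq, ← columnConj_mul hsum, ← columnConj_mul hsum, one_mul, mul_one]

end CornerIsomorphism

section PartialAffineMaps

/-- The half-open unit interval, as a type. -/
abbrev UnitIco : Type := Ico (0 : ℝ) 1

/-- The restriction of `x ↦ m * x + k` to the points of `s ∩ [0,1)` that it maps into `[0,1)`. -/
def partialAffine {m : ℝ} (hm : m ≠ 0) (k : ℝ) (s : Set ℝ) : UnitIco ≃. UnitIco :=
  pequivOfBiUnique (fun x y ↦ (x : ℝ) ∈ s ∧ (y : ℝ) = m * x + k)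
    ⟨fun _ _ _ hx hx' ↦
        Subtype.ext (mul_left_cancel₀ hm (add_right_cancel (hx.2.symm.trans hx'.2))),
      fun _ _ _ hy hy' ↦ Subtype.ext (hy.2.trans hy'.2.symm)⟩

theorem mem_partialAffine {m : ℝ} (hm : m ≠ 0) {k : ℝ} {s : Set ℝ} {x y : UnitIco} :
    y ∈ partialAffine hm k s x ↔ (x : ℝ) ∈ s ∧ (y : ℝ) = m * x + k :=
  mem_pequivOfBiUnique _

/-- The partial bijection `f` of `[0,1)` is the restriction of an affine map `x ↦ m * x + k` to an
interval `[a,b)`, as far as its values lie in `[0,1)`, where `a`, `b` and `k` lie in `K`. -/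
def IsPartialAffine (K : Subfield ℝ) (m : ℝ) (f : UnitIco ≃. UnitIco) : Prop :=
  ∃ a ∈ K, ∃ b ∈ K, ∃ k ∈ K, ∀ x y : UnitIco, y ∈ f x ↔ (x : ℝ) ∈ Ico a b ∧ (y : ℝ) = m * x + k

variable {K : Subfield ℝ} {m m' : ℝ} {f g : UnitIco ≃. UnitIco}

theorem isPartialAffine_partialAffine (hm : m ≠ 0) {a b k : ℝ} (ha : a ∈ K) (hb : b ∈ K)
    (hk : k ∈ K) : IsPartialAffine K m (partialAffine hm k (Ico a b)) :=
  ⟨a, ha, b, hb, k, hk, fun _ _ ↦ mem_partialAffine hm⟩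

theorem isPartialAffine_one_refl : IsPartialAffine K 1 (PEquiv.refl UnitIco) := by
  refine ⟨0, K.zero_mem, 1, K.one_mem, 0, K.zero_mem, fun x y ↦ ?_⟩
  rw [PEquiv.refl_apply, Option.mem_some_iff, Subtype.ext_iff, one_mul, add_zero, eq_comm]
  exact (and_iff_right x.2).symm

theorem IsPartialAffine.symm (hm : 0 < m) (hK : m ∈ K) (hf : IsPartialAffine K m f) :
    IsPartialAffine K m⁻¹ f.symm := by
  obtain ⟨a, ha, b, hb, k, hk, mem_f⟩ := hf
  refine ⟨m * a + k, K.add_mem (K.mul_mem hK ha) hk, m * b + k, K.add_mem (K.mul_mem hK hb) hk,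
    -(m⁻¹ * k), K.neg_mem (K.mul_mem (K.inv_mem hK) hk), fun y x ↦ ?_⟩
  have eq_iff : (x : ℝ) = m⁻¹ * y + -(m⁻¹ * k) ↔ (y : ℝ) = m * x + k := by
    rw [← sub_eq_add_neg, ← mul_sub, eq_inv_mul_iff_mul_eq₀ hm.ne', eq_sub_iff_add_eq, eq_comm]
  rw [PEquiv.mem_iff_mem, mem_f, eq_iff]
  refine and_congr_left fun hy ↦ ?_
  simp only [hy, mem_Ico, add_le_add_iff_right, add_lt_add_iff_right, mul_le_mul_iff_right₀ hm,
    mul_lt_mul_iff_right₀ hm]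

theorem IsPartialAffine.trans (hm : 0 < m) (hK : m ∈ K) (hK' : m' ∈ K)
    (hf : IsPartialAffine K m f) (hg : IsPartialAffine K m' g) :
    IsPartialAffine K (m' * m) (f.trans g) := by
  obtain ⟨a, ha, b, hb, k, hk, mem_f⟩ := hf
  obtain ⟨a', ha', b', hb', k', hk', mem_g⟩ := hg
  have preimage_mem {r : ℝ} (hr : r ∈ K) : (r - k) / m ∈ K := K.div_mem (K.sub_mem hr hk) hK
  refine ⟨max a (max ((a' - k) / m) ((0 - k) / m)),
    max_rec' (· ∈ K) ha (max_rec' (· ∈ K) (preimage_mem ha') (preimage_mem K.zero_mem)),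
    min b (min ((b' - k) / m) ((1 - k) / m)),
    min_rec' (· ∈ K) hb (min_rec' (· ∈ K) (preimage_mem hb') (preimage_mem K.one_mem)),
    m' * k + k', K.add_mem (K.mul_mem hK' hk) hk', fun x z ↦ ?_⟩
  simp only [PEquiv.mem_trans, mem_f, mem_g, mem_Ico, max_le_iff, lt_min_iff, div_le_iff₀ hm,
    lt_div_iff₀ hm, sub_le_iff_le_add, lt_sub_iff_add_lt, mul_comm _ m]
  constructor
  · rintro ⟨⟨y, hy0, hy1⟩, ⟨⟨hax, hxb⟩, rfl⟩, ⟨hay, hyb⟩, hz⟩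
    exact ⟨⟨⟨hax, hay, hy0⟩, hxb, hyb, hy1⟩, by rw [hz]; ring⟩
  · rintro ⟨⟨⟨hax, hay, hy0⟩, hxb, hyb, hy1⟩, hz⟩
    exact ⟨⟨m * x + k, hy0, hy1⟩, ⟨⟨hax, hxb⟩, rfl⟩, ⟨hay, hyb⟩, by rw [hz]; ring⟩

end PartialAffineMaps

section IntervalProjections

/-- The projection of `ℓ²([0,1))` onto the vectors supported in `[a,b)`. -/
def intervalProj (a b : ℝ) : EllTwoEnd UnitIco :=
  coordProj (Subtype.val ⁻¹' Ico a b)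

theorem isStarProjection_intervalProj (a b : ℝ) : IsStarProjection (intervalProj a b) :=
  isStarProjection_coordProj _

theorem intervalProj_eq_one {a b : ℝ} (ha : a ≤ 0) (hb : 1 ≤ b) : intervalProj a b = 1 := by
  rw [intervalProj, ← coordProj_univ]
  exact congrArg _ (eq_univ_of_forall fun x ↦ ⟨ha.trans x.2.1, x.2.2.trans_le hb⟩)

theorem intervalProj_mul (a b c d : ℝ) :
    intervalProj a b * intervalProj c d = intervalProj (max a c) (min b d) := by
  rw [intervalProj, intervalProj, coordProj_mul_coordProj, ← preimage_inter, Ico_inter_Ico]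
  rfl

theorem intervalProj_add {a b c : ℝ} (hab : a ≤ b) (hbc : b ≤ c) :
    intervalProj a b + intervalProj b c = intervalProj a c := by
  rw [intervalProj, intervalProj, intervalProj, ← Ico_union_Ico_eq_Ico hab hbc, preimage_union,
    coordProj_union]
  exact (Ico_disjoint_Ico_same).preimage _

theorem sum_intervalProj {u : ℕ → ℝ} (hu : Monotone u) (n : ℕ) :
    ∑ i ∈ Finset.range n, intervalProj (u i) (u (i + 1)) = intervalProj (u 0) (u n) := by
  induction n with
  | zero => simp [intervalProj, coordProj_empty]
  | succ n ih =>
    rw [Finset.sum_range_succ, ih, intervalProj_add (hu n.zero_le) (hu n.le_succ)]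

end IntervalProjections

section TranslationAlgebra

variable (K : Subfield ℝ)

/-- The monoid of the partial isometries of `ℓ²([0,1))` given by partial translations with data
in `K`. -/
def translationMonoid : Submonoid (EllTwoEnd UnitIco) where
  carrier := pequivOp '' {f | IsPartialAffine K 1 f}
  one_mem' := ⟨_, isPartialAffine_one_refl, pequivOp_refl⟩
  mul_mem' := by
    rintro _ _ ⟨g, hg, rfl⟩ ⟨f, hf, rfl⟩
    refine ⟨_, ?_, (pequivOp_mul g f).symm⟩
    simpa only [mem_ofPred_eq, mul_one] using hf.trans one_pos K.one_mem K.one_mem hg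

theorem star_translationMonoid :
    star (translationMonoid K : Set (EllTwoEnd UnitIco)) =
      translationMonoid K := by
  have star_mem {a : EllTwoEnd UnitIco} (ha : a ∈ translationMonoid K) :
      star a ∈ translationMonoid K := by
    obtain ⟨f, hf, rfl⟩ := ha
    exact ⟨f.symm, by simpa using hf.symm one_pos K.one_mem, (star_pequivOp f).symm⟩
  ext a
  exact ⟨fun ha ↦ star_star a ▸ star_mem ha, star_mem⟩

/-- The C*-algebra on `ℓ²([0,1))` generated by the partial translations with data in `K`. -/
def translationAlgebra : StarSubalgebra ℂ (EllTwoEnd UnitIco) :=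
  (StarAlgebra.adjoin ℂ (translationMonoid K)).topologicalClosure

instance : IsClosed (translationAlgebra K : Set (EllTwoEnd UnitIco)) :=
  StarSubalgebra.isClosed_topologicalClosure _

theorem coe_translationAlgebra :
    (translationAlgebra K : Set (EllTwoEnd UnitIco)) =
      closure (Submodule.span ℂ (translationMonoid K : Set (EllTwoEnd UnitIco)) :
        Set (EllTwoEnd UnitIco)) := by
  have := StarAlgebra.adjoin_eq_span (R := ℂ)
    (translationMonoid K : Set (EllTwoEnd UnitIco))
  rw [star_translationMonoid, union_self, Submonoid.closure_eq] at this
  exact congrArg (closure <| SetLike.coe ·) this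

variable {K}

theorem pequivOp_mem_translationAlgebra {f : UnitIco ≃. UnitIco} (hf : IsPartialAffine K 1 f) :
    pequivOp f ∈ translationAlgebra K := by
  rw [← SetLike.mem_coe, coe_translationAlgebra]
  exact subset_closure (Submodule.subset_span ⟨f, hf, rfl⟩)

theorem intervalProj_mem_translationAlgebra {a b : ℝ} (ha : a ∈ K) (hb : b ∈ K) :
    intervalProj a b ∈ translationAlgebra K := by
  rw [intervalProj, ← pequivOp_eq_coordProj (f := partialAffine one_ne_zero 0 (Ico a b))]
  · exact pequivOp_mem_translationAlgebra (isPartialAffine_partialAffine _ ha hb K.zero_mem)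
  · intro x y
    rw [mem_partialAffine, one_mul, add_zero, and_comm, ← Subtype.ext_iff]
    exact and_congr_right fun h ↦ by rw [h]; rfl

theorem conj_mem_translationAlgebra {l r : EllTwoEnd UnitIco}
    (h : ∀ f, IsPartialAffine K 1 f → l * pequivOp f * r ∈ translationAlgebra K)
    {a : EllTwoEnd UnitIco} (ha : a ∈ translationAlgebra K) :
    l * a * r ∈ translationAlgebra K := by
  rw [← SetLike.mem_coe, coe_translationAlgebra] at ha
  refine closure_span_induction (p := fun a ↦ l * a * r ∈ translationAlgebra K) ?_ ?_ ?_ ?_ ?_ ha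
  · have hclosed : IsClosed (translationAlgebra K : Set (EllTwoEnd UnitIco)) :=
      inferInstance
    exact hclosed.preimage (f := fun a ↦ l * a * r) (by fun_prop)
  · rintro _ ⟨f, hf, rfl⟩
    exact h f hf
  · simp
  · intro a b ha hb
    simpa only [mul_add, add_mul] using add_mem ha hb
  · intro c a ha
    simpa only [mul_smul_comm, smul_mul_assoc] using (translationAlgebra K).smul_mem ha c

theorem dense_span_translationMonoid : Dense
    (Submodule.span ℂ {a : translationAlgebra K | (a : EllTwoEnd UnitIco) ∈ translationMonoid K} :
      Set (translationAlgebra K)) := by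
  have monoid_subset : (translationMonoid K : Set (EllTwoEnd UnitIco)) ⊆ translationAlgebra K := by
    rintro _ ⟨f, hf, rfl⟩
    exact pequivOp_mem_translationAlgebra hf
  have image_span := Submodule.map_span (translationAlgebra K).toSubalgebra.toSubmodule.subtype
    {a : translationAlgebra K | (a : EllTwoEnd UnitIco) ∈ translationMonoid K}
  have image_monoid : (translationAlgebra K).toSubalgebra.toSubmodule.subtype ''
      {a : translationAlgebra K | (a : EllTwoEnd UnitIco) ∈ translationMonoid K} =
        translationMonoid K :=
    Subtype.image_preimage_coe _ _ |>.trans (inter_eq_right.2 monoid_subset)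
  rw [image_monoid] at image_span
  refine Subtype.dense_iff.2 ((coe_translationAlgebra K).trans ?_).le
  exact congrArg (closure <| SetLike.coe ·) image_span.symm

theorem separableSpace_translationAlgebra [Countable K] :
    TopologicalSpace.SeparableSpace (translationAlgebra K) := by
  have countable_generators :
      (translationMonoid K : Set (EllTwoEnd UnitIco)).Countable := by
    refine (countable_range fun t : K × K × K ↦
      pequivOp (partialAffine one_ne_zero (t.1 : ℝ) (Ico (t.2.1 : ℝ) t.2.2))).mono ?_
    rintro _ ⟨f, ⟨a, ha, b, hb, k, hk, mem_f⟩, rfl⟩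
    refine ⟨⟨⟨k, hk⟩, ⟨a, ha⟩, ⟨b, hb⟩⟩, congrArg pequivOp ?_⟩
    refine PEquiv.ext fun x ↦ Option.ext fun y ↦ ?_
    exact (mem_partialAffine _).trans (mem_f x y).symm
  have : TopologicalSpace.IsSeparable
      (translationAlgebra K : Set (EllTwoEnd UnitIco)) := by
    rw [coe_translationAlgebra]
    exact (countable_generators.isSeparable.span (R := ℂ)).closure
  exact this.separableSpace

end TranslationAlgebra

section IntervalElements

variable {K : Subfield ℝ}

/-- The projection of `ℓ²([0,1))` onto the vectors supported in `[a,b)`, as an element of the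
translation algebra. -/
def intervalElt (a b : K) : translationAlgebra K :=
  ⟨intervalProj a b, intervalProj_mem_translationAlgebra a.2 b.2⟩

theorem isStarProjection_intervalElt (a b : K) : IsStarProjection (intervalElt a b) :=
  ⟨Subtype.ext (isStarProjection_intervalProj _ _).isIdempotentElem,
    Subtype.ext (isStarProjection_intervalProj _ _).isSelfAdjoint⟩

theorem intervalElt_mul_of_le {a b c d : K} (hca : c ≤ a) (hbd : b ≤ d) :
    intervalElt a b * intervalElt c d = intervalElt a b := by
  refine Subtype.ext ((intervalProj_mul _ _ _ _).trans ?_)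
  rw [max_eq_left (Subtype.coe_le_coe.2 hca), min_eq_left (Subtype.coe_le_coe.2 hbd)]
  rfl

theorem intervalElt_zero_one : intervalElt (0 : K) 1 = 1 :=
  Subtype.ext (intervalProj_eq_one le_rfl le_rfl)

theorem sum_intervalElt_div_eq_one {N : ℕ} (hN : N ≠ 0) :
    ∑ j ∈ Finset.range N, intervalElt (j / N : K) ((j + 1 : ℕ) / N) = 1 := by
  have hmono : Monotone fun j : ℕ ↦ (j / N : ℝ) := fun i j hij ↦ by dsimp only; gcongr
  ext1
  rw [AddSubmonoidClass.coe_finsetSum]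
  calc _ = ∑ j ∈ Finset.range N, intervalProj (j / N) ((j + 1 : ℕ) / N) := by
        simp [intervalElt]
    _ = 1 := by
      rw [sum_intervalProj hmono]
      exact intervalProj_eq_one (by simp) (by rw [div_self (Nat.cast_ne_zero.2 hN)])

theorem isSome_partialAffine {m : ℝ} (hm : m ≠ 0) {k : ℝ} {s : Set ℝ} {x : UnitIco} :
    (partialAffine hm k s x).isSome ↔ (x : ℝ) ∈ s ∧ m * x + k ∈ Ico (0 : ℝ) 1 := by
  rw [Option.isSome_iff_exists]
  exact ⟨fun ⟨y, hy⟩ ↦ ((mem_partialAffine hm).1 hy).imp_right fun h ↦ by rw [← h]; exact y.2,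
    fun ⟨hs, h⟩ ↦ ⟨⟨_, h⟩, (mem_partialAffine hm).2 ⟨hs, rfl⟩⟩⟩

theorem isSome_symm_partialAffine {m : ℝ} (hm : m ≠ 0) {k : ℝ} {s : Set ℝ} {y : UnitIco} :
    ((partialAffine hm k s).symm y).isSome ↔ ∃ x ∈ s ∩ Ico 0 1, (y : ℝ) = m * x + k := by
  simp only [Option.isSome_iff_exists, ← Option.mem_def, PEquiv.mem_iff_mem, mem_partialAffine]
  exact ⟨fun ⟨x, hs, hy⟩ ↦ ⟨x, ⟨hs, x.2⟩, hy⟩, fun ⟨x, ⟨hs, hx⟩, hy⟩ ↦ ⟨⟨x, hx⟩, hs, hy⟩⟩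

theorem exists_star_mul_eq_intervalElt {a b k : K} (ha : 0 ≤ a) (hb : b ≤ 1) (hak : 0 ≤ a + k)
    (hbk : b + k ≤ 1) : ∃ v : translationAlgebra K,
      star v * v = intervalElt a b ∧ v * star v = intervalElt (a + k) (b + k) := by
  have ha' : (0 : ℝ) ≤ a := ha
  have hb' : (b : ℝ) ≤ 1 := hb
  have hak' : (0 : ℝ) ≤ a + k := hak
  have hbk' : (b : ℝ) + k ≤ 1 := hbk
  refine ⟨⟨_, pequivOp_mem_translationAlgebra
    (isPartialAffine_partialAffine one_ne_zero a.2 b.2 k.2)⟩, Subtype.ext ?_, Subtype.ext ?_⟩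
  · refine (star_pequivOp_mul_self _).trans (congrArg coordProj (ext fun x ↦ ?_))
    rw [mem_ofPred_eq, isSome_partialAffine, one_mul, mem_preimage]
    exact and_iff_left_of_imp fun hx ↦ ⟨by linarith [hx.1], by linarith [hx.2]⟩
  · refine (pequivOp_mul_star_self _).trans (congrArg coordProj (ext fun y ↦ ?_))
    simp only [mem_ofPred_eq, isSome_symm_partialAffine, one_mul, mem_preimage]
    constructor
    · rintro ⟨x, ⟨hx, -⟩, hy⟩
      rw [hy]
      exact ⟨add_le_add_left hx.1 _, add_lt_add_left hx.2 _⟩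
    · rintro ⟨hay, hyb⟩
      push_cast at hay hyb
      exact ⟨y - k, ⟨⟨by linarith, by linarith⟩, by linarith, by linarith⟩, by ring⟩

end IntervalElements

section Simplicity

variable {K : Subfield ℝ}

theorem IsPartialAffine.eventually_mem_iff {f : UnitIco ≃. UnitIco} (hf : IsPartialAffine K 1 f)
    (x : UnitIco) : ∀ᶠ d in 𝓝[>] (x : ℝ), ∀ y z : UnitIco, (y : ℝ) ∈ Ico (x : ℝ) d →
      (z : ℝ) ∈ Ico (x : ℝ) d → (y ∈ f z ↔ y = z ∧ x ∈ f x) := by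
  obtain ⟨a, -, b, -, k, -, mem_f⟩ := hf
  have eventually_le {c : ℝ} : ∀ᶠ d in 𝓝[>] (x : ℝ), (x : ℝ) < c → d < c :=
    eventually_imp_distrib_left.2 fun h ↦
      eventually_nhdsWithin_of_eventually_nhds (eventually_lt_nhds h)
  filter_upwards [eventually_le (c := a), eventually_le (c := b), eventually_le (c := x + |k|)]
    with d hda hdb hdk y z hy hz
  rw [mem_f, mem_f, Subtype.ext_iff, one_mul, one_mul, left_eq_add]
  rcases eq_or_ne k 0 with rfl | hk
  · rw [add_zero, and_comm, and_iff_left rfl]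
    refine and_congr_right fun _ ↦ and_congr ⟨fun h ↦ ?_, hz.1.trans'⟩
      ⟨hz.1.trans_lt, fun h ↦ hz.2.trans (hdb h)⟩
    by_contra! hxa
    exact h.not_gt (hz.2.trans (hda hxa))
  · refine iff_of_false (fun h ↦ ?_) fun h ↦ hk h.2.2
    have := hdk (lt_add_of_pos_right _ (abs_pos.2 hk))
    have : |(y : ℝ) - z| < |k| := abs_lt.2 ⟨by linarith [hy.1, hz.2], by linarith [hy.2, hz.1]⟩
    exact this.ne (congrArg _ (sub_eq_of_eq_add' h.2))

theorem eventually_compression_eq_smul {b : EllTwoEnd UnitIco}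
    (hb : b ∈ Submodule.span ℂ (translationMonoid K : Set (EllTwoEnd UnitIco))) (x : UnitIco) :
    ∀ᶠ d in 𝓝[>] (x : ℝ), ∀ s ⊆ (Subtype.val ⁻¹' Ico (x : ℝ) d : Set UnitIco),
      coordProj s * b * coordProj s = matrixCoeff x x b • coordProj s := by
  induction hb using Submodule.span_induction with
  | mem _ hb =>
    obtain ⟨f, hf, rfl⟩ := hb
    filter_upwards [hf.eventually_mem_iff x] with d hd s hs
    refine ext_matrixCoeff fun y z ↦ ?_
    classical
    rw [matrixCoeff_compression, map_smul, matrixCoeff_coordProj, matrixCoeff_pequivOp,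
      matrixCoeff_pequivOp]
    by_cases hyz : y ∈ s ∧ z ∈ s
    · simp [hd y z (hs hyz.1) (hs hyz.2), hyz.1, hyz.2, ite_and]
    · rw [if_neg hyz, if_neg fun h : y = z ∧ y ∈ s ↦ hyz (h.1 ▸ ⟨h.2, h.2⟩), smul_zero]
  | zero => simp
  | add b c _ _ hb hc =>
    filter_upwards [hb, hc] with d hb hc s hs
    rw [mul_add, add_mul, hb s hs, hc s hs, map_add, add_smul]
  | smul c b _ hb =>
    filter_upwards [hb] with d hb s hs
    rw [mul_smul_comm, smul_mul_assoc, hb s hs, map_smul, smul_assoc]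

theorem eventually_norm_compression_sub_lt {a : EllTwoEnd UnitIco} (ha : a ∈ translationAlgebra K)
    (x : UnitIco) {ε : ℝ} (hε : 0 < ε) :
    ∀ᶠ d in 𝓝[>] (x : ℝ), ∀ s ⊆ (Subtype.val ⁻¹' Ico (x : ℝ) d : Set UnitIco),
      ‖coordProj s * a * coordProj s - matrixCoeff x x a • coordProj s‖ < ε := by
  rw [← SetLike.mem_coe, coe_translationAlgebra] at ha
  obtain ⟨b, hb, hab⟩ := Metric.mem_closure_iff.1 ha (ε / 2) (half_pos hε)
  rw [dist_eq_norm] at hab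
  filter_upwards [eventually_compression_eq_smul hb x] with d hd s hs
  calc ‖coordProj s * a * coordProj s - matrixCoeff x x a • coordProj s‖
      = ‖coordProj s * (a - b) * coordProj s - matrixCoeff x x (a - b) • coordProj s‖ := by
        rw [mul_sub, sub_mul, map_sub, sub_smul, hd s hs, sub_sub_sub_cancel_right]
    _ ≤ ‖a - b‖ + ‖a - b‖ * 1 := by
        refine (norm_sub_le _ _).trans (add_le_add (norm_compression_le s _) ?_)
        rw [norm_smul]
        gcongr
        · exact norm_matrixCoeff_le x x _
        · exact norm_coordProj_le_one s
    _ < ε := by linarith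

theorem exists_intervalElt_mem_of_ne_bot {I : TwoSidedIdeal (translationAlgebra K)} (hI : I ≠ ⊥) :
    ∃ p q : K, 0 ≤ p ∧ p < q ∧ q ≤ 1 ∧ intervalElt p q ∈ I := by
  obtain ⟨y, hyI, x, hx⟩ : ∃ y ∈ I, ∃ x, (y : EllTwoEnd UnitIco) (basisVec x) ≠ 0 := by
    by_contra! h
    refine hI (eq_bot_iff.2 fun y hy ↦ ?_)
    have : y = 0 := Subtype.ext (ext_matrixCoeff fun z x ↦ by simp [matrixCoeff_apply, h y hy x])
    exact this ▸ zero_mem _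
  have coeff_pos : 0 < ‖matrixCoeff x x (star (y : EllTwoEnd UnitIco) * y)‖ := by
    rw [matrixCoeff_star_mul_self, Complex.norm_real, norm_pow, norm_norm]
    positivity
  obtain ⟨d, hd, hxd, hd1⟩ := ((eventually_norm_compression_sub_lt (star y * y).2 x coeff_pos).and
    (Ioo_mem_nhdsGT x.2.2)).exists
  obtain ⟨p, hxp, hpd⟩ := exists_rat_btwn hxd
  obtain ⟨q, hpq, hqd⟩ := exists_rat_btwn hpd
  have compression_lt := hd (Subtype.val ⁻¹' Ico (p : ℝ) q)
    (preimage_mono (Ico_subset_Ico hxp.le hqd.le))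
  refine ⟨p, q, ?_, ?_, ?_, mem_twoSidedIdeal_of_norm_compression_sub_lt (𝕜 := ℂ)
    (I.mul_mem_left (star y) y hyI) (isStarProjection_intervalElt _ _).isIdempotentElem
    compression_lt⟩
  · exact_mod_cast x.2.1.trans hxp.le
  · exact_mod_cast hpq
  · exact_mod_cast (hqd.trans hd1).le

theorem intervalElt_add_mem {I : TwoSidedIdeal (translationAlgebra K)} {a b k : K} (ha : 0 ≤ a)
    (hb : b ≤ 1) (hak : 0 ≤ a + k) (hbk : b + k ≤ 1) (h : intervalElt a b ∈ I) :
    intervalElt (a + k) (b + k) ∈ I := by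
  obtain ⟨v, hv, hv'⟩ := exists_star_mul_eq_intervalElt ha hb hak hbk
  rw [← hv']
  refine mul_star_mem_twoSidedIdeal ?_ (hv ▸ h)
  rw [hv']
  exact (isStarProjection_intervalElt _ _).isIdempotentElem

theorem isSimpleCStarAlgebra_translationAlgebra : IsSimpleCStarAlgebra (translationAlgebra K) := by
  refine fun I _ ↦ or_iff_not_imp_left.2 fun hI ↦ twoSidedIdeal_eq_top_of_one_mem ?_
  obtain ⟨p, q, hp, hpq, hq, hI⟩ := exists_intervalElt_mem_of_ne_bot hI
  obtain ⟨n, hn⟩ := exists_nat_one_div_lt (sub_pos.2 hpq)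
  have hN : (0 : K) < (n + 1 : ℕ) := by positivity
  have hpN : p + 1 / (n + 1 : ℕ) ≤ q := by push_cast; linarith
  have piece_mem : intervalElt p (p + 1 / (n + 1 : ℕ)) ∈ I := by
    rw [← intervalElt_mul_of_le le_rfl hpN]
    exact I.mul_mem_left _ _ hI
  rw [← sum_intervalElt_div_eq_one n.succ_ne_zero]
  refine sum_mem fun j hj ↦ ?_
  have hjN : ((j + 1 : ℕ) : K) / (n + 1 : ℕ) ≤ 1 := by
    rw [div_le_one hN]
    exact_mod_cast Finset.mem_range.1 hj
  have := intervalElt_add_mem (k := (j : K) / ((n + 1 : ℕ) : K) - p) hp (hpN.trans hq)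
    (by rw [add_sub_cancel]; positivity) (by convert hjN using 1; push_cast; ring) piece_mem
  convert this using 2 <;> push_cast <;> ring

end Simplicity

section ChangeOfVariables

/-- Lebesgue measure on `[0,1)`; measures on subtypes are not a global instance in Mathlib. -/
instance : MeasureSpace UnitIco := Measure.Subtype.measureSpace

instance : IsProbabilityMeasure (volume : Measure UnitIco) :=
  ⟨by rw [Measure.Subtype.volume_univ measurableSet_Ico.nullMeasurableSet, Real.volume_Ico]; simp⟩

theorem integral_extend_zero {E : Type*} [NormedAddCommGroup E] [NormedSpace ℝ E]
    (F : UnitIco → E) :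
    ∫ t : ℝ, Function.extend Subtype.val F 0 t = ∫ x, F x := by
  have extend_eq_zero : ∀ t ∉ Ico (0 : ℝ) 1, Function.extend Subtype.val F 0 t = 0 :=
    fun t ht ↦ Function.extend_apply' F (0 : ℝ → E) t fun ⟨x, hx⟩ ↦ ht (hx ▸ x.2)
  rw [← setIntegral_eq_integral_of_forall_compl_eq_zero extend_eq_zero,
    ← integral_subtype measurableSet_Ico]
  exact integral_congr_ae (.of_forall fun x ↦ Subtype.val_injective.extend_apply _ _ x)

theorem extend_elim_symm_comp_affine {E : Type*} [Zero E] {m k : ℝ} (hm : m ≠ 0)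
    {f : UnitIco ≃. UnitIco} (hf : ∀ x y, y ∈ f x → (y : ℝ) = m * x + k)
    (Φ : UnitIco → UnitIco → E) (t : ℝ) :
    Function.extend Subtype.val (fun y ↦ (f.symm y).elim 0 (Φ · y)) 0 (m * t + k) =
      Function.extend Subtype.val (fun x ↦ (f x).elim 0 (Φ x)) 0 t := by
  by_cases h : ∃ x y : UnitIco, (x : ℝ) = t ∧ y ∈ f x
  · obtain ⟨x, y, rfl, hxy⟩ := h
    rw [← hf x y hxy, Subtype.val_injective.extend_apply, Subtype.val_injective.extend_apply,
      Option.mem_def.1 hxy, Option.mem_def.1 ((PEquiv.mem_iff_mem f).2 hxy)]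
    rfl
  · push Not at h
    trans 0
    · by_cases hy : ∃ y : UnitIco, (y : ℝ) = m * t + k
      · obtain ⟨y, hy⟩ := hy
        rw [← hy, Subtype.val_injective.extend_apply]
        cases hx : f.symm y with
        | none => rfl
        | some x =>
          have hxy := (PEquiv.mem_iff_mem f).1 hx
          exact absurd hxy (h x y
            (mul_left_cancel₀ hm (add_right_cancel ((hf x y hxy).symm.trans hy))))
      · exact Function.extend_apply' _ _ _ hy
    · by_cases hx : ∃ x : UnitIco, (x : ℝ) = t
      · obtain ⟨x, rfl⟩ := hx
        rw [Subtype.val_injective.extend_apply, Option.eq_none_iff_forall_not_mem.2 (h x · rfl)]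
        rfl
      · exact (Function.extend_apply' _ (0 : ℝ → E) t hx).symm

theorem integral_elim_symm_eq_smul {E : Type*} [NormedAddCommGroup E] [NormedSpace ℝ E] {m k : ℝ}
    (hm : 0 < m) {f : UnitIco ≃. UnitIco} (hf : ∀ x y, y ∈ f x → (y : ℝ) = m * x + k)
    (Φ : UnitIco → UnitIco → E) :
    ∫ y, (f.symm y).elim 0 (Φ · y) = m • ∫ x, (f x).elim 0 (Φ x) := by
  rw [← integral_extend_zero, ← integral_extend_zero]
  simp only [← extend_elim_symm_comp_affine hm.ne' hf]
  rw [Measure.integral_comp_mul_left (fun t ↦ Function.extend _ _ _ (t + k)),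
    integral_add_right_eq_self, abs_of_pos (inv_pos.2 hm), smul_inv_smul₀ hm.ne']

theorem integral_matrixCoeff_pequivOp_mul {m k : ℝ} (hm : 0 < m) {f : UnitIco ≃. UnitIco}
    (hf : ∀ x y, y ∈ f x → (y : ℝ) = m * x + k) (c : EllTwoEnd UnitIco) :
    ∫ x, matrixCoeff x x (pequivOp f * c) = m * ∫ x, matrixCoeff x x (c * pequivOp f) := by
  simp only [matrixCoeff_pequivOp_mul, matrixCoeff_mul_pequivOp]
  exact integral_elim_symm_eq_smul hm hf fun x y ↦ matrixCoeff x y c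

end ChangeOfVariables

section DiagonalTrace

variable {K : Subfield ℝ}

theorem measurable_matrixCoeff_self {a : EllTwoEnd UnitIco} (ha : a ∈ translationAlgebra K) :
    Measurable fun x ↦ matrixCoeff x x a := by
  rw [← SetLike.mem_coe, coe_translationAlgebra] at ha
  refine closure_span_induction (p := fun a ↦ Measurable fun x ↦ matrixCoeff x x a)
    ?_ ?_ ?_ ?_ ?_ ha
  · refine IsSeqClosed.isClosed fun u a hu hua ↦ measurable_of_tendsto_metrizable hu ?_
    exact tendsto_pi_nhds.2 fun x ↦ ((matrixCoeff x x).continuous.tendsto a).comp hua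
  · rintro _ ⟨f, ⟨a, -, b, -, k, -, mem_f⟩, rfl⟩
    classical
    simp only [matrixCoeff_pequivOp, mem_f, one_mul]
    refine Measurable.ite ?_ measurable_const measurable_const
    exact (measurableSet_Ico.preimage measurable_subtype_coe).inter
      (measurableSet_eq_fun measurable_subtype_coe (measurable_subtype_coe.add_const k))
  · simp
  · intro a b ha hb
    simpa only [map_add] using! ha.add hb
  · intro c a ha
    simpa only [map_smul] using! ha.const_smul c

theorem integrable_matrixCoeff_self {a : EllTwoEnd UnitIco} (ha : a ∈ translationAlgebra K) :
    Integrable fun x ↦ matrixCoeff x x a :=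
  .of_bound (measurable_matrixCoeff_self ha).aestronglyMeasurable ‖a‖
    (.of_forall fun x ↦ norm_matrixCoeff_le x x a)

variable (K) in
/-- The trace `a ↦ ∫ ⟪δ_x, a δ_x⟫ dx` on the translation algebra. -/
def diagonalTrace : translationAlgebra K →L[ℂ] ℂ :=
  LinearMap.mkContinuous
    { toFun a := ∫ x, matrixCoeff x x (a : EllTwoEnd UnitIco)
      map_add' a b := by
        simp only [AddMemClass.coe_add, map_add]
        exact integral_add (integrable_matrixCoeff_self a.2) (integrable_matrixCoeff_self b.2)
      map_smul' c a := by
        simp only [SetLike.val_smul, map_smul]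
        exact integral_smul c _ }
    1 fun a ↦ by
      simpa using norm_integral_le_of_norm_le_const (μ := volume)
        (.of_forall fun x ↦ norm_matrixCoeff_le x x (a : EllTwoEnd UnitIco))

theorem diagonalTrace_apply (a : translationAlgebra K) :
    diagonalTrace K a = ∫ x, matrixCoeff x x (a : EllTwoEnd UnitIco) := rfl

theorem diagonalTrace_mul_comm (a b : translationAlgebra K) :
    diagonalTrace K (a * b) = diagonalTrace K (b * a) := by
  have mul_left_eq_mul_right : (diagonalTrace K).comp (ContinuousLinearMap.mul ℂ _ |>.flip b) =
      (diagonalTrace K).comp (ContinuousLinearMap.mul ℂ _ b) := by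
    refine ContinuousLinearMap.ext_on dense_span_translationMonoid ?_
    rintro a ⟨f, ⟨_, _, _, _, k, _, mem_f⟩, hfa⟩
    have := integral_matrixCoeff_pequivOp_mul one_pos (fun x y hy ↦ ((mem_f x y).1 hy).2) b
    rw [Complex.ofReal_one, one_mul, hfa] at this
    exact this
  exact congrArg (· a) mul_left_eq_mul_right

theorem isTracialState_diagonalTrace :
    IsTracialState (translationAlgebra K) (diagonalTrace K : translationAlgebra K →ₗ[ℂ] ℂ) where
  map_one := by
    change ∫ x : UnitIco, matrixCoeff x x 1 = 1
    simp [matrixCoeff_one_self]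
  nonneg a := by
    change 0 ≤ ∫ x, matrixCoeff x x (star (a : EllTwoEnd UnitIco) * (a : EllTwoEnd UnitIco))
    simp only [matrixCoeff_star_mul_self]
    exact integral_nonneg fun x ↦ by positivity
  tracial := diagonalTrace_mul_comm

end DiagonalTrace

section UniqueTrace

variable {K : Subfield ℝ}

theorem intervalElt_add {a b c : K} (hab : a ≤ b) (hbc : b ≤ c) :
    intervalElt a b + intervalElt b c = intervalElt a c :=
  Subtype.ext (intervalProj_add hab hbc)

theorem exists_intervalElt_eq_sub (a b : K) : ∃ s ∈ Icc (0 : K) 1, ∃ t ∈ Icc (0 : K) 1,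
    intervalElt a b = intervalElt 0 t - intervalElt 0 s := by
  have hs : max 0 (min a 1) ∈ Icc (0 : K) 1 :=
    ⟨le_max_left _ _, max_le zero_le_one (min_le_right _ _)⟩
  refine ⟨_, hs, max (max 0 (min a 1)) (min b 1),
    ⟨hs.1.trans (le_max_left _ _), max_le hs.2 (min_le_right _ _)⟩, eq_sub_of_add_eq' ?_⟩
  rw [← intervalElt_add hs.1 (le_max_left _ (min b 1))]
  refine congrArg _ (Subtype.ext (congrArg coordProj (ext fun x ↦ ?_)))
  have x_nonneg : (0 : ℝ) ≤ x := x.2.1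
  have x_lt_one : (x : ℝ) < 1 := x.2.2
  have coe_max (s t : K) : ((max s t : K) : ℝ) = max (s : ℝ) t :=
    (Subtype.mono_coe (· ∈ K)).map_max
  have coe_min (s t : K) : ((min s t : K) : ℝ) = min (s : ℝ) t :=
    (Subtype.mono_coe (· ∈ K)).map_min
  simp only [mem_preimage, mem_Ico, coe_max, coe_min, ZeroMemClass.coe_zero, OneMemClass.coe_one,
    max_le_iff, min_le_iff, lt_max_iff, lt_min_iff, x_nonneg, x_lt_one,
    x_lt_one.not_ge, x_nonneg.not_gt, or_false, false_or, true_and, and_true]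
  exact and_congr_right fun ha ↦ (or_iff_right ha.not_gt).symm

theorem exists_intervalProj_compression_eq_zero {f : UnitIco ≃. UnitIco} {k : ℝ} (hk : k ≠ 0)
    (hf : ∀ x y, y ∈ f x → (y : ℝ) = x + k) : ∃ N : ℕ, N ≠ 0 ∧ ∀ j : ℕ,
      intervalProj (j / N) ((j + 1 : ℕ) / N) * pequivOp f *
        intervalProj (j / N) ((j + 1 : ℕ) / N) = 0 := by
  obtain ⟨n, hn⟩ := exists_nat_one_div_lt (abs_pos.2 hk)
  refine ⟨n + 1, n.succ_ne_zero, fun j ↦ ext_matrixCoeff fun y x ↦ ?_⟩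
  classical
  rw [intervalProj, matrixCoeff_compression, map_zero, matrixCoeff_pequivOp, ← ite_and]
  refine if_neg fun ⟨⟨hy, hx⟩, hxy⟩ ↦ ?_
  rw [mem_preimage, mem_Ico, Nat.cast_succ j, add_div] at hx hy
  rw [← Nat.cast_succ] at hn
  refine hn.not_gt (abs_lt.2 ?_)
  constructor <;> linarith [hf x y hxy, hx.1, hx.2, hy.1, hy.2]

namespace IsTracialState

variable {σ τ : translationAlgebra K →ₗ[ℂ] ℂ}

theorem map_intervalElt_add (hσ : IsTracialState _ σ) {a b k : K} (ha : 0 ≤ a) (hb : b ≤ 1)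
    (hak : 0 ≤ a + k) (hbk : b + k ≤ 1) :
    σ (intervalElt (a + k) (b + k)) = σ (intervalElt a b) := by
  obtain ⟨v, hv, hv'⟩ := exists_star_mul_eq_intervalElt ha hb hak hbk
  rw [← hv, ← hv', hσ.tracial]

theorem map_intervalElt_zero (hσ : IsTracialState _ σ) {t : K} (ht : t ∈ Icc 0 1) :
    σ (intervalElt 0 t) = (t : ℝ) := by
  have eq_re := Complex.eq_re_of_ofReal_le (r := 0)
    (hσ.nonneg_of_isStarProjection (isStarProjection_intervalElt 0 t))
  rw [eq_re]
  refine congrArg _ (eq_coe_of_additive_of_nonneg (G := fun t ↦ (σ (intervalElt 0 t)).re)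
    ?_ (fun t _ _ ↦ ?_) (fun s t hs ht hst ↦ ?_) ht)
  · simp only [intervalElt_zero_one, hσ.map_one, Complex.one_re]
  · exact (Complex.nonneg_iff.1
      (hσ.nonneg_of_isStarProjection (isStarProjection_intervalElt 0 t))).1
  · have shift := hσ.map_intervalElt_add (a := 0) (b := t) (k := s) le_rfl (by linarith)
      (by simpa) (by linarith)
    rw [zero_add, add_comm t] at shift
    simp only [← intervalElt_add hs (le_add_of_nonneg_right ht), map_add, shift, Complex.add_re]

theorem map_eq_of_mem_translationMonoid (hσ : IsTracialState _ σ) (hτ : IsTracialState _ τ)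
    {a : translationAlgebra K} (ha : (a : EllTwoEnd UnitIco) ∈ translationMonoid K) :
    σ a = τ a := by
  obtain ⟨f, ⟨p, hp, q, hq, k, -, mem_f⟩, hfa⟩ := ha
  simp only [one_mul] at mem_f
  rcases eq_or_ne k 0 with rfl | hk
  · have a_eq : a = intervalElt ⟨p, hp⟩ ⟨q, hq⟩ := by
      refine Subtype.ext (hfa.symm.trans (pequivOp_eq_coordProj fun x y ↦ ?_))
      rw [mem_f, add_zero, and_comm, ← Subtype.ext_iff]
      exact and_congr_right fun h ↦ by rw [h]; rfl
    obtain ⟨s, hs, t, ht, h⟩ := exists_intervalElt_eq_sub (⟨p, hp⟩ : K) ⟨q, hq⟩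
    rw [a_eq, h, map_sub, map_sub, hσ.map_intervalElt_zero hs, hσ.map_intervalElt_zero ht,
      hτ.map_intervalElt_zero hs, hτ.map_intervalElt_zero ht]
  · obtain ⟨N, hN, h⟩ := exists_intervalProj_compression_eq_zero hk
      fun x y hy ↦ ((mem_f x y).1 hy).2
    have map_eq_zero {ρ : translationAlgebra K →ₗ[ℂ] ℂ} (hρ : IsTracialState _ ρ) : ρ a = 0 := by
      refine hρ.eq_zero_of_compressions_eq_zero
        (fun j _ ↦ (isStarProjection_intervalElt _ _).isIdempotentElem)
        (sum_intervalElt_div_eq_one hN) fun j _ ↦ Subtype.ext ?_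
      simpa [intervalElt, hfa] using h j
    rw [map_eq_zero hσ, map_eq_zero hτ]

theorem unique (hσ : IsTracialState _ σ) (hτ : IsTracialState _ τ) : σ = τ := by
  have := ContinuousLinearMap.ext_on (f := ⟨σ, hσ.continuous⟩) (g := ⟨τ, hτ.continuous⟩)
    dense_span_translationMonoid fun a ha ↦ hσ.map_eq_of_mem_translationMonoid hτ ha
  exact congrArg ContinuousLinearMap.toLinearMap this

end IsTracialState

end UniqueTrace

section FundamentalGroup

variable {K : Subfield ℝ} {s : ℝ}

/-- The partial isometry of `ℓ²([0,1))` given by `x ↦ s * x - i`, which maps `[i / s, (i + 1) / s)`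
onto `[0,1)` whenever the former lies in `[0,1)`. These are the entries of the column that
conjugates the translation algebra onto a corner of trace `s`. -/
def dilationOp (hs : 0 < s) (i : ℕ) : EllTwoEnd UnitIco :=
  pequivOp (partialAffine hs.ne' (-i) (Ico 0 1))

theorem star_dilationOp_mul_self (hs : 0 < s) (i : ℕ) :
    star (dilationOp hs i) * dilationOp hs i = intervalProj (i / s) ((i + 1 : ℕ) / s) := by
  refine (star_pequivOp_mul_self _).trans (congrArg coordProj (ext fun x ↦ ?_))
  rw [mem_ofPred_eq, isSome_partialAffine, and_iff_right x.2, mem_preimage, mem_Ico, mem_Ico,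
    div_le_iff₀' hs, lt_div_iff₀' hs, ← sub_eq_add_neg, sub_nonneg, sub_lt_iff_lt_add']
  push_cast
  rw [add_comm]

theorem sum_star_dilationOp_mul_self (hs : 0 < s) {n : ℕ} (hn : s ≤ n) :
    ∑ i : Fin n, star (dilationOp hs i) * dilationOp hs i = 1 := by
  have mono : Monotone fun i : ℕ ↦ (i / s : ℝ) := fun i j hij ↦ by dsimp only; gcongr
  simp only [star_dilationOp_mul_self]
  rw [Fin.sum_univ_eq_sum_range fun i : ℕ ↦ intervalProj (i / s) ((i + 1 : ℕ) / s),
    sum_intervalProj mono]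
  exact intervalProj_eq_one (by simp) ((one_le_div hs).2 hn)

theorem isPartialAffine_dilation (hs : 0 < s) (i : ℕ) :
    IsPartialAffine K s (partialAffine hs.ne' (-i) (Ico 0 1)) :=
  isPartialAffine_partialAffine _ K.zero_mem K.one_mem (K.neg_mem (natCast_mem K i))

theorem dilationOp_mul_mul_star_mem (hs : 0 < s) (hsK : s ∈ K) (i j : ℕ) {a : EllTwoEnd UnitIco}
    (ha : a ∈ translationAlgebra K) :
    dilationOp hs i * a * star (dilationOp hs j) ∈ translationAlgebra K := by
  have affine := isPartialAffine_dilation (K := K) hs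
  refine conj_mem_translationAlgebra (fun f hf ↦ ?_) ha
  rw [dilationOp, dilationOp, star_pequivOp, pequivOp_mul, pequivOp_mul]
  refine pequivOp_mem_translationAlgebra ?_
  have := ((affine j).symm hs hsK).trans (inv_pos.2 hs) (K.inv_mem hsK) (K.mul_mem hsK K.one_mem)
    (hf.trans one_pos K.one_mem hsK (affine i))
  simpa [hs.ne'] using this

theorem star_dilationOp_mul_mul_mem (hs : 0 < s) (hsK : s ∈ K) (i j : ℕ) {a : EllTwoEnd UnitIco}
    (ha : a ∈ translationAlgebra K) :
    star (dilationOp hs i) * a * dilationOp hs j ∈ translationAlgebra K := by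
  have affine := isPartialAffine_dilation (K := K) hs
  refine conj_mem_translationAlgebra (fun f hf ↦ ?_) ha
  rw [dilationOp, dilationOp, star_pequivOp, pequivOp_mul, pequivOp_mul]
  refine pequivOp_mem_translationAlgebra ?_
  have := (affine j).trans hs hsK (K.mul_mem (K.inv_mem hsK) K.one_mem)
    (hf.trans one_pos K.one_mem (K.inv_mem hsK) ((affine i).symm hs hsK))
  simpa [hs.ne'] using this

theorem diagonalTrace_dilationOp_mul_star (hs : 0 < s) (i : ℕ) {p q : translationAlgebra K}
    (hp : (p : EllTwoEnd UnitIco) = dilationOp hs i * star (dilationOp hs i))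
    (hq : (q : EllTwoEnd UnitIco) = star (dilationOp hs i) * dilationOp hs i) :
    diagonalTrace K p = s * diagonalTrace K q := by
  rw [diagonalTrace_apply, diagonalTrace_apply, hp, hq]
  exact integral_matrixCoeff_pequivOp_mul hs (fun x y h ↦ ((mem_partialAffine _).1 h).2) _

theorem mem_fundamentalGroup_translationAlgebra (hs : 0 < s) (hsK : s ∈ K) :
    s ∈ fundamentalGroup (translationAlgebra K) (diagonalTrace K).toLinearMap := by
  set w : Fin ⌈s⌉₊ → EllTwoEnd UnitIco := fun i ↦ dilationOp hs i
  have hsum : ∑ i, star (w i) * w i = 1 := sum_star_dilationOp_mul_self hs (Nat.le_ceil s)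
  have hw : ∀ i j, ∀ a ∈ translationAlgebra K, w i * a * star (w j) ∈ translationAlgebra K :=
    fun i j _ ha ↦ dilationOp_mul_mul_star_mem hs hsK i j ha
  have hw' : ∀ i j, ∀ a ∈ translationAlgebra K, star (w i) * a * w j ∈ translationAlgebra K :=
    fun i j _ ha ↦ star_dilationOp_mul_mul_mem hs hsK i j ha
  refine ⟨⌈s⌉₊, columnConj w hw 1, Nat.ceil_pos.2 hs, ?_, ?_,
    ⟨_, isCornerIso_columnConj hsum hw hw'⟩, ?_⟩
  · rw [← columnConj_mul hsum, one_mul]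
  · rw [← columnConj_star, star_one]
  · let q (i : Fin ⌈s⌉₊) : translationAlgebra K := ⟨star (w i) * 1 * w i, hw' i i 1 (one_mem _)⟩
    have sum_q : ∑ i, q i = 1 := Subtype.ext (by
      simpa only [q, AddSubmonoidClass.coe_finsetSum, mul_one, OneMemClass.coe_one] using hsum)
    calc ∑ i, diagonalTrace K (columnConj w hw 1 i i) = ∑ i, s * diagonalTrace K (q i) :=
          Finset.sum_congr rfl fun i _ ↦ diagonalTrace_dilationOp_mul_star hs i
            (congrArg (· * star (w i)) (mul_one _)) (congrArg (· * w i) (mul_one _))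
      _ = s * diagonalTrace K 1 := by rw [← Finset.mul_sum, ← map_sum, sum_q]
      _ = s := (congrArg _ isTracialState_diagonalTrace.map_one).trans (mul_one _)

end FundamentalGroup

end

theorem exists_algebra_subset_fundamentalGroup_general (S : Set ℝ) (hSpos : ∀ s ∈ S, 0 < s) :
    ∃ (A : Type) (_ : CStarAlgebra A) (τ : A →ₗ[ℂ] ℂ),
      (S.Countable → TopologicalSpace.SeparableSpace A) ∧ IsSimpleCStarAlgebra A ∧
      IsTracialState A τ ∧ (∀ σ : A →ₗ[ℂ] ℂ, IsTracialState A σ → σ = τ) ∧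
      S ⊆ fundamentalGroup A τ := by
  refine ⟨translationAlgebra (Subfield.closure S), inferInstance, (diagonalTrace _).toLinearMap,
    fun hS ↦ ?_, isSimpleCStarAlgebra_translationAlgebra,
    isTracialState_diagonalTrace, fun σ hσ ↦ hσ.unique isTracialState_diagonalTrace,
    fun s hs ↦ mem_fundamentalGroup_translationAlgebra (hSpos s hs) (Subfield.subset_closure hs)⟩
  have : Countable (Subfield.closure S) := by
    rw [← Cardinal.mk_le_aleph0_iff]
    exact (Subfield.cardinalMk_closure_le_max S).trans
      (max_le (Cardinal.mk_le_aleph0_iff.2 hS.to_subtype) le_rfl)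
  exact separableSpace_translationAlgebra

/-- every countable set of positive reals is contained in the fundamental
group of some separable unital simple C*-algebra with unique tracial state. -/
theorem exists_algebra_subset_fundamentalGroup
    (S : Set ℝ) (hS : S.Countable) (hSpos : ∀ s ∈ S, 0 < s) :
    ∃ (A : Type) (inst : CStarAlgebra A) (instSep : TopologicalSpace.SeparableSpace A)
      (τ : A →ₗ[ℂ] ℂ),
      IsSimpleCStarAlgebra A ∧ IsTracialState A τ ∧
      (∀ σ : A →ₗ[ℂ] ℂ, IsTracialState A σ → σ = τ) ∧
      S ⊆ fundamentalGroup A τ :=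
  let ⟨A, inst, τ, separable, h⟩ := exists_algebra_subset_fundamentalGroup_general S hSpos
  ⟨A, inst, separable hS, τ, h⟩
end

section
/- Let θ be an irrational real number that is not quadratic, i.e. there is no triple of integers (a,b,c) ≠ (0,0,0) with aθ² + bθ + c = 0. If t is a positive real number such that both t and t⁻¹ belong to the additive subgroup ℤ + ℤθ of ℝ, then t = 1. In particular IM_+(ℤ + ℤθ) = {1}. -/
/-- The positive inner multiplier group of an additive subgroup `E` of `ℝ`:
`IM₊(E) = {t > 0 | t ∈ E, t⁻¹ ∈ E, tE = E}`. -/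
def IMplus (E : AddSubgroup ℝ) : Set ℝ :=
  {t : ℝ | 0 < t ∧ t ∈ E ∧ t⁻¹ ∈ E ∧ (fun x => t * x) '' (E : Set ℝ) = (E : Set ℝ)}

/-- The additive subgroup `ℤ + ℤθ = {a + bθ : a, b ∈ ℤ}` of `ℝ`. -/
def zTheta (θ : ℝ) : AddSubgroup ℝ where
  carrier := {x : ℝ | ∃ a b : ℤ, x = (a : ℝ) + (b : ℝ) * θ}
  zero_mem' := ⟨0, 0, by push_cast; ring⟩
  add_mem' := by
    rintro x y ⟨a, b, rfl⟩ ⟨c, d, rfl⟩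
    exact ⟨a + c, b + d, by push_cast; ring⟩
  neg_mem' := by
    rintro x ⟨a, b, rfl⟩
    exact ⟨-a, -b, by push_cast; ring⟩

/-!
The elements of `ℤ + ℤθ` are the values at `θ` of integer polynomials of degree at most one. If
`p(θ) q(θ) = 1` for two such polynomials, then `p q - 1` has degree at most two and vanishes at
`θ`, so it is zero because `θ` is not quadratic. Hence `p` is a unit of `ℤ[X]`, that is, `p = ±1`.
-/

open Polynomial

lemma isUnit_of_aeval_mul_aeval_eq_one {R A : Type*} [CommRing R] [Ring A] [Algebra R A]
    {θ : A} {n : ℕ} (hθ : ∀ f : R[X], f.natDegree ≤ n → aeval θ f = 0 → f = 0) {p q : R[X]}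
    (hn : p.natDegree + q.natDegree ≤ n) (hpq : aeval θ p * aeval θ q = 1) : IsUnit p := by
  have hdeg : (p * q - 1).natDegree ≤ n := by
    simpa using natDegree_sub_le_of_le (natDegree_mul_le.trans hn) natDegree_one.le
  have hroot : aeval θ (p * q - 1) = 0 := by simp [hpq]
  exact .of_mul_eq_one q (sub_eq_zero.mp (hθ _ hdeg hroot))

lemma eq_zero_of_natDegree_le_two_of_aeval_eq_zero {R A : Type*} [CommSemiring R] [Semiring A]
    [Algebra R A] {θ : A}
    (hθ : ∀ a b c : R, algebraMap R A a * θ ^ 2 + algebraMap R A b * θ + algebraMap R A c = 0 →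
      a = 0 ∧ b = 0 ∧ c = 0)
    {f : R[X]} (hdeg : f.natDegree ≤ 2) (hf : aeval θ f = 0) : f = 0 := by
  have hquad := eq_quadratic_of_degree_le_two (natDegree_le_iff_degree_le.mp hdeg)
  rw [hquad] at hf
  obtain ⟨h₂, h₁, h₀⟩ := hθ (f.coeff 2) (f.coeff 1) (f.coeff 0) (by simpa using hf)
  simpa [h₂, h₁, h₀] using hquad

lemma mem_zTheta_iff_exists_aeval_eq {θ x : ℝ} :
    x ∈ zTheta θ ↔ ∃ p : ℤ[X], p.natDegree ≤ 1 ∧ aeval θ p = x := by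
  constructor
  · rintro ⟨a, b, rfl⟩
    exact ⟨C b * X + C a, natDegree_linear_le, by simp [add_comm]⟩
  · rintro ⟨p, hp, rfl⟩
    obtain ⟨b, a, rfl⟩ := exists_eq_X_add_C_of_natDegree_le_one hp
    exact ⟨a, b, by simp [add_comm]⟩

lemma eq_one_or_eq_neg_one_of_mem_zTheta_of_inv_mem {θ t : ℝ}
    (hθ : ∀ f : ℤ[X], f.natDegree ≤ 2 → aeval θ f = 0 → f = 0)
    (ht₀ : t ≠ 0) (ht : t ∈ zTheta θ) (htinv : t⁻¹ ∈ zTheta θ) : t = 1 ∨ t = -1 := by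
  obtain ⟨p, hp, rfl⟩ := mem_zTheta_iff_exists_aeval_eq.mp ht
  obtain ⟨q, hq, hqinv⟩ := mem_zTheta_iff_exists_aeval_eq.mp htinv
  have hunit : IsUnit p :=
    isUnit_of_aeval_mul_aeval_eq_one hθ (add_le_add hp hq) (by rw [hqinv, mul_inv_cancel₀ ht₀])
  obtain ⟨r, hr, rfl⟩ := Polynomial.isUnit_iff.mp hunit
  rcases Int.isUnit_iff.mp hr with rfl | rfl <;> simp

lemma one_mem_zTheta (θ : ℝ) : 1 ∈ zTheta θ := ⟨1, 0, by simp⟩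

lemma one_mem_IMplus_iff {E : AddSubgroup ℝ} : 1 ∈ IMplus E ↔ 1 ∈ E := by
  simp [IMplus]

/-- if `θ` is irrational and not quadratic, then the only positive real
`t` with both `t` and `t⁻¹` in `ℤ + ℤθ` is `t = 1`; in particular
`IM₊(ℤ + ℤθ) = {1}`. -/
theorem IMplus_zTheta_eq_one_of_not_quadratic
    (θ : ℝ) (hirr : Irrational θ)
    (hnq : ∀ a b c : ℤ, (a : ℝ) * θ ^ 2 + (b : ℝ) * θ + (c : ℝ) = 0 →
      a = 0 ∧ b = 0 ∧ c = 0) :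
    (∀ t : ℝ, 0 < t → t ∈ zTheta θ → t⁻¹ ∈ zTheta θ → t = 1) ∧
    IMplus (zTheta θ) = {1} := by
  have hroot (f : ℤ[X]) (hdeg : f.natDegree ≤ 2) (hf : aeval θ f = 0) : f = 0 :=
    eq_zero_of_natDegree_le_two_of_aeval_eq_zero (by simpa using hnq) hdeg hf
  have eq_one (t : ℝ) (hpos : 0 < t) (ht : t ∈ zTheta θ) (htinv : t⁻¹ ∈ zTheta θ) : t = 1 :=
    (eq_one_or_eq_neg_one_of_mem_zTheta_of_inv_mem hroot hpos.ne' ht htinv).resolve_right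
      (by linarith)
  refine ⟨eq_one, Set.Subset.antisymm ?_ ?_⟩
  · rintro t ⟨hpos, ht, htinv, -⟩
    exact eq_one t hpos ht htinv
  · exact Set.singleton_subset_iff.mpr (one_mem_IMplus_iff.mpr (one_mem_zTheta θ))
end

section
/- Let θ be an irrational real number that is a quadratic algebraic integer, i.e. θ² + lθ + m = 0 for some integers l, m. Then ℤ + ℤθ is a unital subring of ℝ, and its group of positive invertible elements (ℤ + ℤθ)^×_+ = {t ∈ ℝ : t > 0, t ∈ ℤ + ℤθ, t⁻¹ ∈ ℤ + ℤθ} is infinite cyclic: there exists a real number ε₀ > 1 such that (ℤ + ℤθ)^×_+ = {ε₀^n : n ∈ ℤ}, and ε₀ is the smallest element of (ℤ + ℤθ)^×_+ exceeding 1. -/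
/-!
The hypothesis says that `ω ↦ θ` embeds the quadratic order `ℤ[ω] = QuadraticAlgebra ℤ (-m) (-l)`
into `ℝ` with image `ℤ + ℤθ`. If a unit `z = x + yω` has image `t > 1`, then `y ≠ 0` and its
conjugate `z'` has image `±t⁻¹`, so `√D ≤ |y| √D = |t - (±t⁻¹)| < t + 1`, where
`D = (ω - ω')² = l² - 4m` is the discriminant. Being a nonsquare congruent to `0` or `1` modulo `4`,
`D` is at least `5`; hence no positive unit lies strictly between `1` and `√D - 1 > 1`, and an
isolated subgroup of the archimedean group of positive reals is cyclic. It is nontrivial because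
Pell's equation `x² - D y² = 1` has a solution with `y ≠ 0`.
-/

section PosUnits

variable {K : Type*} [Field K] [LinearOrder K] [IsStrictOrderedRing K]

instance instMulArchimedeanSubtypePos [Archimedean K] : MulArchimedean {x : K // 0 < x} where
  arch x _ hy := (pow_unbounded_of_one_lt (x : K) hy).imp fun _ h => h.le

/-- The group of positive invertible elements of a subring `S` of an ordered field `K`, encoded as a
subgroup of the ordered group of positive elements of `K` (`Kˣ` itself is not an ordered group). -/
def posUnits (S : Subring K) : Subgroup {x : K // 0 < x} where
  carrier := {g | (g : K) ∈ S ∧ (g : K)⁻¹ ∈ S}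
  one_mem' := by simp [S.one_mem]
  mul_mem' := fun hg hh => by
    simpa [mul_comm] using And.intro (S.mul_mem hg.1 hh.1) (S.mul_mem hg.2 hh.2)
  inv_mem' := fun hg => by simpa using hg.symm

theorem mem_posUnits {S : Subring K} {g : {x : K // 0 < x}} :
    g ∈ posUnits S ↔ (g : K) ∈ S ∧ (g : K)⁻¹ ∈ S :=
  Iff.rfl

theorem exists_isUnit_map_eq_of_mem_posUnits_range {R : Type*} [CommRing R] {φ : R →+* K}
    (hφ : Function.Injective φ) {g : {x : K // 0 < x}} (hg : g ∈ posUnits φ.range) :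
    ∃ z, IsUnit z ∧ φ z = g := by
  obtain ⟨⟨z, hz⟩, w, hw⟩ := hg
  refine ⟨z, IsUnit.of_mul_eq_one w (hφ ?_), hz⟩
  rw [map_mul, map_one, hz, hw, mul_inv_cancel₀ g.2.ne']

theorem abs_map_mem_posUnits_range {R : Type*} [Ring R] (φ : R →+* K) {z : R} (hz : IsUnit z) :
    ⟨|φ z|, abs_pos.2 (hz.map φ).ne_zero⟩ ∈ posUnits φ.range := by
  obtain ⟨u, rfl⟩ := hz
  have abs_mem (w : R) : |φ w| ∈ φ.range := by
    rcases abs_choice (φ w) with h | h <;> rw [h]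
    exacts [⟨w, rfl⟩, ⟨-w, map_neg φ w⟩]
  refine ⟨abs_mem u, ?_⟩
  rw [← abs_inv, ← map_units_inv]
  exact abs_mem _

end PosUnits

section QuadraticOrder

open QuadraticAlgebra

/-- The discriminant `b² + 4a` of the polynomial `X² - bX - a` defining `QuadraticAlgebra R a b`. -/
def quadraticDiscr {R : Type*} [CommRing R] (a b : R) : R := b ^ 2 + 4 * a

section CommRing

variable {R : Type*} [CommRing R] {a b : R}

theorem omega_sub_star_omega_sq :
    (ω - star ω : QuadraticAlgebra R a b) ^ 2 = algebraMap R _ (quadraticDiscr a b) := by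
  rw [sq, quadraticDiscr]
  ext
  · simp only [re_mul, re_sub, im_sub, re_star, im_star, omega_re, omega_im, algebraMap_re]
    ring
  · simp only [im_mul, re_sub, im_sub, re_star, im_star, omega_re, omega_im, algebraMap_im]
    ring

theorem not_isSquare_quadraticDiscr [IsDomain (QuadraticAlgebra R a b)] [NeZero (2 : R)] :
    ¬ IsSquare (quadraticDiscr a b) := by
  rintro ⟨k, hk⟩
  have hsq : (ω - star ω : QuadraticAlgebra R a b) ^ 2 = algebraMap R _ k ^ 2 := by
    rw [omega_sub_star_omega_sq, hk, map_mul, sq]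
  have him : (ω - star ω : QuadraticAlgebra R a b).im = 0 := by
    rcases sq_eq_sq_iff_eq_or_eq_neg.1 hsq with h | h <;> simp [h]
  exact two_ne_zero (α := R) (by simpa [one_add_one_eq_two] using him)

end CommRing

variable {a b : ℤ}

theorem four_lt_quadraticDiscr (hnonneg : 0 ≤ quadraticDiscr a b)
    (hsq : ¬ IsSquare (quadraticDiscr a b)) : 4 < quadraticDiscr a b := by
  by_contra! hle
  have hmod : quadraticDiscr a b % 4 = 0 ∨ quadraticDiscr a b % 4 = 1 := by
    rw [quadraticDiscr, Int.add_mul_emod_self_left]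
    rcases Int.even_or_odd b with h | h
    exacts [.inl (Int.emod_eq_zero_of_dvd (pow_dvd_pow_of_dvd h.two_dvd 2)),
      .inr (Int.sq_mod_four_eq_one_of_odd h)]
  have hcases : quadraticDiscr a b = 0 ∨ quadraticDiscr a b = 1 ∨ quadraticDiscr a b = 4 := by
    omega
  rcases hcases with h | h | h
  exacts [hsq ⟨0, h⟩, hsq ⟨1, h⟩, hsq ⟨2, h⟩]

theorem exists_norm_eq_one_and_im_ne_zero (hpos : 0 < quadraticDiscr a b)
    (hsq : ¬ IsSquare (quadraticDiscr a b)) :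
    ∃ z : QuadraticAlgebra ℤ a b, norm z = 1 ∧ z.im ≠ 0 := by
  obtain ⟨x, y, hpell, hy⟩ := Pell.exists_of_not_isSquare hpos hsq
  -- The witness is `x + y * (ω - star ω)`.
  refine ⟨⟨x - b * y, 2 * y⟩, ?_, by simpa using hy⟩
  rw [← hpell, norm_def, quadraticDiscr]
  ring

theorem map_omega_sub_star_sq {A : Type*} [Ring A] (φ : QuadraticAlgebra ℤ a b →+* A) :
    φ (ω - star ω) ^ 2 = ((quadraticDiscr a b : ℤ) : A) := by
  rw [← map_pow, omega_sub_star_omega_sq, eq_intCast, map_intCast]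

section RingHom

variable {K : Type*} [CommRing K] [LinearOrder K] [IsStrictOrderedRing K]

theorem abs_map_mul_abs_map_star_of_isUnit (φ : QuadraticAlgebra ℤ a b →+* K)
    {z : QuadraticAlgebra ℤ a b} (hz : IsUnit z) : |φ z| * |φ (star z)| = 1 := by
  have hnorm : |norm z| = 1 := Int.isUnit_iff_abs_eq.1 (isUnit_iff_norm_isUnit.1 hz)
  rw [← abs_mul, ← map_mul, ← algebraMap_norm_eq_mul_star, eq_intCast, map_intCast,
    ← Int.cast_abs, hnorm, Int.cast_one]

theorem im_ne_zero_of_isUnit_of_one_lt_map (φ : QuadraticAlgebra ℤ a b →+* K)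
    {z : QuadraticAlgebra ℤ a b} (hz : IsUnit z) (hlt : 1 < φ z) : z.im ≠ 0 := by
  intro him
  have hstar : star z = z := by ext <;> simp [him]
  have hmul := abs_map_mul_abs_map_star_of_isUnit φ hz
  rw [hstar, abs_of_pos (one_pos.trans hlt)] at hmul
  exact (one_lt_mul_of_lt_of_le hlt hlt.le).ne' hmul

theorem abs_map_omega_sub_star_lt (φ : QuadraticAlgebra ℤ a b →+* K)
    {z : QuadraticAlgebra ℤ a b} (hz : IsUnit z) (hlt : 1 < φ z) :
    |φ (ω - star ω)| < φ z + 1 := by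
  have hconj : |φ (star z)| < 1 := by
    have hmul := abs_map_mul_abs_map_star_of_isUnit φ hz
    rw [abs_of_pos (one_pos.trans hlt)] at hmul
    by_contra! hle
    exact (one_lt_mul_of_lt_of_le hlt hle).ne' hmul
  have him : (1 : K) ≤ |(z.im : K)| := by
    exact_mod_cast Int.one_le_abs (im_ne_zero_of_isUnit_of_one_lt_map φ hz hlt)
  calc |φ (ω - star ω)| ≤ |(z.im : K)| * |φ (ω - star ω)| :=
        le_mul_of_one_le_left (abs_nonneg _) him
    _ = |φ z - φ (star z)| := by
        rw [← map_sub, sub_star z, map_zsmul, zsmul_eq_mul, abs_mul]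
    _ ≤ |φ z| + |φ (star z)| := abs_sub _ _
    _ < φ z + 1 := by rw [abs_of_pos (one_pos.trans hlt)]; gcongr

theorem four_lt_quadraticDiscr_of_injective {φ : QuadraticAlgebra ℤ a b →+* K}
    (hφ : Function.Injective φ) : 4 < quadraticDiscr a b := by
  have : IsDomain (QuadraticAlgebra ℤ a b) := hφ.isDomain φ
  have hnonneg : (0 : K) ≤ ((quadraticDiscr a b : ℤ) : K) := by
    rw [← map_omega_sub_star_sq φ]
    exact sq_nonneg _
  exact four_lt_quadraticDiscr (by exact_mod_cast hnonneg) not_isSquare_quadraticDiscr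

theorem two_lt_abs_map_omega_sub_star {φ : QuadraticAlgebra ℤ a b →+* K}
    (hφ : Function.Injective φ) : 2 < |φ (ω - star ω)| := by
  rw [← abs_two, ← sq_lt_sq, map_omega_sub_star_sq]
  calc (2 : K) ^ 2 = ((4 : ℤ) : K) := by norm_num
    _ < ((quadraticDiscr a b : ℤ) : K) := Int.cast_lt.2 (four_lt_quadraticDiscr_of_injective hφ)

end RingHom

section PosUnitsRange

variable {K : Type*} [Field K] [LinearOrder K] [IsStrictOrderedRing K]
  {φ : QuadraticAlgebra ℤ a b →+* K}

theorem posUnits_range_ne_bot (hφ : Function.Injective φ) : posUnits φ.range ≠ ⊥ := by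
  have : IsDomain (QuadraticAlgebra ℤ a b) := hφ.isDomain φ
  obtain ⟨z, hnorm, him⟩ := exists_norm_eq_one_and_im_ne_zero
    (four_pos.trans (four_lt_quadraticDiscr_of_injective hφ)) not_isSquare_quadraticDiscr
  have hz : IsUnit z := isUnit_iff_norm_isUnit.2 (hnorm ▸ isUnit_one)
  refine fun hbot => him ?_
  have hmem := abs_map_mem_posUnits_range φ hz
  rw [hbot, Subgroup.mem_bot] at hmem
  have habs : |φ z| = 1 := congrArg Subtype.val hmem
  have hz_eq : z = 1 ∨ z = -1 := by
    simpa only [← hφ.eq_iff, map_neg, map_one] using eq_or_eq_neg_of_abs_eq habs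
  rcases hz_eq with rfl | rfl <;> simp

theorem exists_isLeast_one_lt_posUnits_range [Archimedean K] (hφ : Function.Injective φ) :
    ∃ ε, IsLeast {g | g ∈ posUnits φ.range ∧ 1 < g} ε := by
  have hgap : 1 < |φ (ω - star ω)| - 1 := by
    linarith [two_lt_abs_map_omega_sub_star hφ]
  refine Subgroup.exists_isLeast_one_lt (posUnits_range_ne_bot hφ)
    (a := ⟨|φ (ω - star ω)| - 1, one_pos.trans hgap⟩) hgap ?_
  rw [Set.disjoint_left]
  rintro g hg ⟨hlt : (1 : K) < g, hg_lt : (g : K) < |φ (ω - star ω)| - 1⟩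
  obtain ⟨z, hz, hzg⟩ := exists_isUnit_map_eq_of_mem_posUnits_range hφ hg
  rw [← hzg] at hlt hg_lt
  linarith [abs_map_omega_sub_star_lt φ hz hlt]

end PosUnitsRange

theorem map_eq_re_add_im_mul {A : Type*} [Ring A] (φ : QuadraticAlgebra ℤ a b →+* A)
    (z : QuadraticAlgebra ℤ a b) : φ z = z.re + z.im * φ ω := by
  conv_lhs => rw [← mk_eta z, mk_eq_add_smul_omega]
  simp

theorem exists_ringHom_map_omega_eq {A : Type*} [Ring A] {θ : A} (hθ : θ * θ = a + b * θ) :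
    ∃ φ : QuadraticAlgebra ℤ a b →+* A, φ ω = θ :=
  ⟨(lift ⟨θ, by simpa using hθ⟩ : QuadraticAlgebra ℤ a b →ₐ[ℤ] A).toRingHom, by simp⟩

theorem injective_of_irrational_map_omega {φ : QuadraticAlgebra ℤ a b →+* ℝ}
    (hirr : Irrational (φ ω)) : Function.Injective φ := by
  rw [injective_iff_map_eq_zero]
  intro z hz
  rw [map_eq_re_add_im_mul] at hz
  have him : z.im = 0 := by
    by_contra him
    exact ((hirr.intCast_mul him).intCast_add z.re).ne_zero hz
  have hre : z.re = 0 := by simpa [him] using hz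
  exact QuadraticAlgebra.ext hre him

theorem mem_zTheta_map_omega {φ : QuadraticAlgebra ℤ a b →+* ℝ} {x : ℝ} :
    x ∈ zTheta (φ ω) ↔ x ∈ φ.range := by
  constructor
  · rintro ⟨c, d, rfl⟩
    exact ⟨⟨c, d⟩, map_eq_re_add_im_mul φ _⟩
  · rintro ⟨z, rfl⟩
    exact ⟨z.re, z.im, map_eq_re_add_im_mul φ z⟩

end QuadraticOrder

/-- if `θ` is an irrational quadratic algebraic integer, then `ℤ + ℤθ`
is a unital subring of `ℝ` and its group of positive invertible elements is infinite
cyclic, generated by its smallest element `ε₀ > 1`. -/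
theorem posUnits_zTheta_infinite_cyclic
    (θ : ℝ) (hirr : Irrational θ) (l m : ℤ)
    (hquad : θ ^ 2 + (l : ℝ) * θ + (m : ℝ) = 0) :
    ((1 : ℝ) ∈ zTheta θ ∧
      ∀ x ∈ zTheta θ, ∀ y ∈ zTheta θ, x * y ∈ zTheta θ) ∧
    ∃ ε₀ : ℝ, 1 < ε₀ ∧
      {t : ℝ | 0 < t ∧ t ∈ zTheta θ ∧ t⁻¹ ∈ zTheta θ} =
        {x : ℝ | ∃ n : ℤ, x = ε₀ ^ n} ∧
      (∀ t : ℝ, 0 < t → t ∈ zTheta θ → t⁻¹ ∈ zTheta θ → 1 < t → ε₀ ≤ t) := by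
  obtain ⟨φ, rfl⟩ : ∃ φ : QuadraticAlgebra ℤ (-m) (-l) →+* ℝ, φ QuadraticAlgebra.omega = θ :=
    exists_ringHom_map_omega_eq (by push_cast; linear_combination hquad)
  simp only [mem_zTheta_map_omega]
  refine ⟨⟨one_mem _, fun x hx y hy => mul_mem hx hy⟩, ?_⟩
  obtain ⟨ε, hε⟩ :=
    exists_isLeast_one_lt_posUnits_range (injective_of_irrational_map_omega hirr)
  have hcyclic : posUnits φ.range = Subgroup.zpowers ε := by
    rw [Subgroup.zpowers_eq_closure, Subgroup.cyclic_of_min hε]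
  refine ⟨ε, hε.1.2, ?_, fun t ht0 ht ht' ht1 =>
    hε.2 ⟨(mem_posUnits (g := ⟨t, ht0⟩)).2 ⟨ht, ht'⟩, ht1⟩⟩
  ext t
  constructor
  · rintro ⟨ht0, ht⟩
    have hmem : ⟨t, ht0⟩ ∈ posUnits φ.range := mem_posUnits.2 ht
    rw [hcyclic, Subgroup.mem_zpowers_iff] at hmem
    obtain ⟨n, hn⟩ := hmem
    exact ⟨n, (congrArg Subtype.val hn).symm⟩
  · rintro ⟨n, rfl⟩
    exact ⟨(ε ^ n).2, mem_posUnits.1 (zpow_mem hε.1.1 n)⟩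
end

section
/- Let θ be an irrational real number satisfying kθ² + lθ + m = 0 for integers k, l, m with k ≥ 1 and gcd(k,l,m) = 1. Then {cθ + d : a,b,c,d ∈ ℤ, ad − bc = ±1, (aθ + b)/(cθ + d) = θ} equals the group of invertible elements of the ring ℤ + ℤkθ, i.e. equals {t ∈ ℝ : t ≠ 0, t ∈ ℤ + ℤkθ, t⁻¹ ∈ ℤ + ℤkθ}. -/
/-!
Write `L` for the lattice spanned by `θ` and `1`. A matrix `M` with rows `(a, b)` and `(c, d)` fixes
`θ` under the Möbius action exactly when `(θ, 1)` is an eigenvector of `M` with eigenvalue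
`x = cθ + d ≠ 0`. Then `xL ⊆ L`, and invertibility of `M` over the base ring amounts to
`x⁻¹L ⊆ L`. Hence the factors `cθ + d` of the stabilizer of `θ` are the units of the multiplier ring
`L / L = {x | xL ⊆ L}`. Comparing coefficients in the quadratic equation, whose coefficients
`k, l, m` generate the unit ideal, shows that this multiplier ring is spanned by `kθ` and `1`.
-/

section Multiplier

open Matrix Submodule

variable {R A : Type*} [CommRing R] [CommRing A] [Algebra R A]

theorem mem_div_span_iff {M : Submodule R A} {s : Set A} {x : A} :
    x ∈ M / span R s ↔ ∀ y ∈ s, x * y ∈ M := by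
  have hspan : span R s ≤ M.comap (LinearMap.mulLeft R x) ↔ ∀ y ∈ s, x * y ∈ M := span_le
  rw [mem_div_iff_forall_mul_mem, ← hspan]
  rfl

variable {ι : Type*} [Fintype ι] {v : ι → A}

theorem mem_span_range_div_self_iff_exists_matrix {x : A} :
    x ∈ span R (Set.range v) / span R (Set.range v) ↔
      ∃ M : Matrix ι ι R, M.map (algebraMap R A) *ᵥ v = x • v := by
  simp_rw [mem_div_span_iff, Set.forall_mem_range, mem_span_range_iff_exists_fun,
    Classical.skolem, funext_iff, mulVec, dotProduct, map_apply, ← Algebra.smul_def,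
    Pi.smul_apply, smul_eq_mul]
  rfl

theorem eq_one_of_map_mulVec_eq_self [DecidableEq ι] (hv : LinearIndependent R v)
    {M : Matrix ι ι R} (hM : M.map (algebraMap R A) *ᵥ v = v) : M = 1 := by
  ext i j
  refine Fintype.linearIndependent_iffₛ.mp hv (M i) ((1 : Matrix ι ι R) i) ?_ j
  simpa [mulVec, dotProduct, Algebra.smul_def, one_apply] using congrFun hM i

theorem exists_isUnit_det_mulVec_eq_smul_iff [DecidableEq ι] (hv : LinearIndependent R v)
    (x : Aˣ) :
    (∃ M : Matrix ι ι R, IsUnit M.det ∧ M.map (algebraMap R A) *ᵥ v = (x : A) • v) ↔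
      (x : A) ∈ span R (Set.range v) / span R (Set.range v) ∧
        ((x⁻¹ : Aˣ) : A) ∈ span R (Set.range v) / span R (Set.range v) := by
  simp_rw [mem_span_range_div_self_iff_exists_matrix]
  constructor
  · rintro ⟨M, hdet, hM⟩
    refine ⟨⟨M, hM⟩, M⁻¹, ?_⟩
    calc M⁻¹.map (algebraMap R A) *ᵥ v
        = ((x⁻¹ : Aˣ) : A) • M⁻¹.map (algebraMap R A) *ᵥ M.map (algebraMap R A) *ᵥ v := by
          rw [hM, mulVec_smul, smul_smul, Units.inv_mul, one_smul]
      _ = ((x⁻¹ : Aˣ) : A) • v := by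
          rw [mulVec_mulVec, ← Matrix.map_mul, nonsing_inv_mul M hdet,
            Matrix.map_one _ (map_zero _) (map_one _), one_mulVec]
  · rintro ⟨⟨M, hM⟩, N, hN⟩
    have hNM : N * M = 1 := eq_one_of_map_mulVec_eq_self hv <| by
      rw [Matrix.map_mul, ← mulVec_mulVec, hM, mulVec_smul, hN, smul_smul, Units.mul_inv, one_smul]
    exact ⟨M, isUnit_det_of_left_inverse hNM, hM⟩

theorem dvd_of_forall_dvd_mul_of_span_eq_top {s : Set R} (hs : Ideal.span s = ⊤) {r c : R}
    (h : ∀ a ∈ s, r ∣ c * a) : r ∣ c := by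
  have hle : Ideal.span s ≤ comap (LinearMap.mulLeft R c) (Ideal.span {r}) :=
    Ideal.span_le.mpr fun a ha ↦ Ideal.mem_span_singleton.mpr (h a ha)
  rw [hs] at hle
  simpa [Ideal.mem_span_singleton] using hle (mem_top (x := 1))

theorem span_pair_div_self_eq_of_quadratic {θ : A} (hθ : LinearIndependent R ![θ, 1])
    {k l m : R} (hklm : Ideal.span {k, l, m} = ⊤) (hquad : k • θ ^ 2 + l • θ + m • 1 = 0) :
    span R {θ, 1} / span R {θ, 1} = span R {k • θ, 1} := by
  ext x
  simp only [mem_div_span_iff, Set.mem_insert_iff, Set.mem_singleton_iff, forall_eq_or_imp,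
    forall_eq, mul_one, mem_span_pair]
  constructor
  · rintro ⟨⟨a, b, hab⟩, c, d, rfl⟩
    -- Eliminate `θ ^ 2` from `k • (c • θ + d) * θ = k • (a • θ + b)` and compare coefficients.
    obtain ⟨hcl, hcm⟩ : k * (d - a) - c * l = 0 ∧ -(c * m) - k * b = 0 := by
      refine LinearIndependent.pair_iff.mp hθ _ _ ?_
      simp only [Algebra.smul_def, map_sub, map_mul, map_neg] at hab hquad ⊢
      linear_combination -algebraMap R A k * hab - algebraMap R A c * hquad
    obtain ⟨n, rfl⟩ : k ∣ c := by
      refine dvd_of_forall_dvd_mul_of_span_eq_top hklm ?_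
      simp only [Set.mem_insert_iff, Set.mem_singleton_iff, forall_eq_or_imp, forall_eq]
      exact ⟨dvd_mul_left k c, ⟨d - a, (sub_eq_zero.mp hcl).symm⟩,
        ⟨-b, by linear_combination -hcm⟩⟩
    exact ⟨n, d, by rw [smul_smul, mul_comm]⟩
  · rintro ⟨n, d, rfl⟩
    refine ⟨⟨d - n * l, -(n * m), ?_⟩, n * k, d, by rw [mul_smul]⟩
    simp only [Algebra.smul_def, map_sub, map_mul, map_neg] at hquad ⊢
    linear_combination -algebraMap R A n * hquad

end Multiplier

section Mobius

open Matrix Submodule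

variable {R K : Type*} [CommRing R] [Field K] [Algebra R K]

theorem mobius_fixed_iff_mulVec_eq_smul {θ : K} (hθ : θ ≠ 0) (a b c d : R) (x : K) :
    ((a • θ + b • 1) / (c • θ + d • 1) = θ ∧ x = c • θ + d • 1) ↔
      x ≠ 0 ∧ !![a, b; c, d].map (algebraMap R K) *ᵥ ![θ, 1] = x • ![θ, 1] := by
  have hmulVec : !![a, b; c, d].map (algebraMap R K) *ᵥ ![θ, 1] = x • ![θ, 1] ↔
      a • θ + b • 1 = x * θ ∧ c • θ + d • 1 = x := by
    simp [funext_iff, Fin.forall_fin_two, Algebra.smul_def]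
  rw [hmulVec]
  constructor
  · rintro ⟨hfix, rfl⟩
    have hden : c • θ + d • (1 : K) ≠ 0 := fun h ↦ hθ (by rw [← hfix, h, div_zero])
    exact ⟨hden, ((div_eq_iff hden).mp hfix).trans (mul_comm _ _), rfl⟩
  · rintro ⟨hx, hnum, rfl⟩
    exact ⟨by rw [hnum, mul_div_cancel_left₀ _ hx], rfl⟩

theorem exists_mobius_fixed_iff_exists_matrix {θ : K} (hθ : θ ≠ 0) (x : K) :
    (∃ a b c d : R, IsUnit (a * d - b * c) ∧
        (a • θ + b • 1) / (c • θ + d • 1) = θ ∧ x = c • θ + d • 1) ↔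
      x ≠ 0 ∧ ∃ M : Matrix (Fin 2) (Fin 2) R,
        IsUnit M.det ∧ M.map (algebraMap R K) *ᵥ ![θ, 1] = x • ![θ, 1] := by
  simp_rw [mobius_fixed_iff_mulVec_eq_smul hθ]
  constructor
  · rintro ⟨a, b, c, d, hdet, hx, hM⟩
    exact ⟨hx, !![a, b; c, d], by rwa [det_fin_two_of], hM⟩
  · rintro ⟨hx, M, hdet, hM⟩
    rw [M.eta_fin_two] at hM
    exact ⟨M 0 0, M 0 1, M 1 0, M 1 1, M.det_fin_two ▸ hdet, hx, hM⟩

theorem mobius_stabilizer_eq_units_general {θ : K} (hθ : LinearIndependent R ![θ, 1])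
    {k l m : R} (hklm : Ideal.span {k, l, m} = ⊤) (hquad : k • θ ^ 2 + l • θ + m • 1 = 0) :
    {x : K | ∃ a b c d : R, IsUnit (a * d - b * c) ∧
        (a • θ + b • 1) / (c • θ + d • 1) = θ ∧ x = c • θ + d • 1} =
      {t : K | t ≠ 0 ∧ t ∈ span R {k • θ, 1} ∧ t⁻¹ ∈ span R {k • θ, 1}} := by
  have : Nontrivial R := (algebraMap R K).domain_nontrivial
  have hθ0 : θ ≠ 0 := hθ.ne_zero 0
  ext x
  rw [Set.mem_ofPred_eq, Set.mem_ofPred_eq, exists_mobius_fixed_iff_exists_matrix hθ0]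
  refine and_congr_right fun hx ↦ ?_
  simpa only [Units.val_mk0, Units.val_inv_eq_inv_val, range_cons_cons_empty,
    span_pair_div_self_eq_of_quadratic hθ hklm hquad]
    using exists_isUnit_det_mulVec_eq_smul_iff hθ (Units.mk0 x hx)

end Mobius

theorem mem_zTheta_iff_mem_span {θ x : ℝ} :
    x ∈ zTheta θ ↔ x ∈ Submodule.span ℤ {θ, 1} := by
  rw [Submodule.mem_span_pair, exists_comm]
  simp only [zsmul_eq_mul, mul_one, add_comm, eq_comm (b := x)]
  rfl

theorem linearIndependent_pair_one_of_irrational {θ : ℝ} (hθ : Irrational θ) :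
    LinearIndependent ℤ ![θ, 1] := by
  refine LinearIndependent.pair_iff.mpr fun p q h ↦ ?_
  have hp : p = 0 := by
    by_contra hp
    exact ((hθ.intCast_mul hp).add_intCast q).ne_zero (by simpa using h)
  exact ⟨hp, by simpa [hp] using h⟩

theorem span_triple_eq_top_iff_isUnit_gcd {R : Type*} [CommRing R] [IsDomain R] [IsBezout R]
    [GCDMonoid R] {x y z : R} : Ideal.span {x, y, z} = ⊤ ↔ IsUnit (gcd (gcd x y) z) := by
  have hspan : Ideal.span {gcd (gcd x y) z} = Ideal.span {x, y, z} := by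
    rw [span_gcd, Ideal.span_insert, span_gcd]
    simp only [Ideal.span_insert, sup_assoc]
  rw [← hspan, Ideal.span_singleton_eq_top]

/-- for `θ` irrational with `kθ² + lθ + m = 0`, `k ≥ 1` and
`gcd(k,l,m) = 1`, the set `{cθ + d : a,b,c,d ∈ ℤ, ad - bc = ±1, (aθ+b)/(cθ+d) = θ}`
equals the group of invertible elements of the ring `ℤ + ℤkθ`. -/
theorem mobius_stabilizer_eq_units
    (θ : ℝ) (hirr : Irrational θ) (k l m : ℤ) (hk : 1 ≤ k)
    (hgcd : Int.gcd (Int.gcd k l) m = 1)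
    (hquad : (k : ℝ) * θ ^ 2 + (l : ℝ) * θ + (m : ℝ) = 0) :
    {x : ℝ | ∃ a b c d : ℤ, (a * d - b * c = 1 ∨ a * d - b * c = -1) ∧
        ((a : ℝ) * θ + (b : ℝ)) / ((c : ℝ) * θ + (d : ℝ)) = θ ∧
        x = (c : ℝ) * θ + (d : ℝ)} =
      {t : ℝ | t ≠ 0 ∧ t ∈ zTheta ((k : ℝ) * θ) ∧ t⁻¹ ∈ zTheta ((k : ℝ) * θ)} := by
  have hunit : IsUnit (gcd (gcd k l) m) := by simp [← Int.coe_gcd, hgcd]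
  simpa [Int.isUnit_iff, mem_zTheta_iff_mem_span] using mobius_stabilizer_eq_units_general
    (linearIndependent_pair_one_of_irrational hirr) (span_triple_eq_top_iff_isUnit_gcd.mpr hunit)
    (by simpa using hquad)
end
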